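/- arXiv:1503.03670 — 2 statements merged into one kernel-verified Lean document; each statement's English description precedes it below -/
import Mathlib

section
/- Let a²,b²,c² > 0, k ∈ ℤ∖{0}, and let w₀, w₁, w₂ ∈ C²((0,∞)) be such that the map Q(x) = w₀(r)E₀ + w₁(r)E₁(φ) + w₂(r)E₂(φ) extends to a C² map on ℝ² and satisfies ΔQ = −a²Q − b²(Q² − (1/3)|Q|²I₃) + c²|Q|²Q on ℝ², with lim_{r→∞} w₁(r) = s₊/√2 and lim_{r→∞} w₂(r) = 0. Then w₂ ≡ 0 on (0,∞), i.e. Q(x) = w₀(r)E₀ + w₁(r)E₁(φ) for all x. -/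
open Real Matrix
open scoped ENNReal

noncomputable section

abbrev Mat3 := Matrix (Fin 3) (Fin 3) ℝ

/-- `Q` is a symmetric traceless 3×3 real matrix, i.e. an element of `S₀`. -/
def isS0 (Q : Mat3) : Prop := Qᵀ = Q ∧ Q.trace = 0

def e1 : Fin 3 → ℝ := ![1, 0, 0]
def e2 : Fin 3 → ℝ := ![0, 1, 0]
def e3 : Fin 3 → ℝ := ![0, 0, 1]

/-- `n(φ) = (cos(kφ/2), sin(kφ/2), 0)`. -/
def nvec (k : ℤ) (φ : ℝ) : Fin 3 → ℝ := ![Real.cos ((k : ℝ) * φ / 2), Real.sin ((k : ℝ) * φ / 2), 0]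

/-- `m(φ) = (−sin(kφ/2), cos(kφ/2), 0)`. -/
def mvec (k : ℤ) (φ : ℝ) : Fin 3 → ℝ := ![-Real.sin ((k : ℝ) * φ / 2), Real.cos ((k : ℝ) * φ / 2), 0]

/-- `I₂ = I₃ − e₃ ⊗ e₃`. -/
def I2 : Mat3 := 1 - vecMulVec e3 e3

def E0 : Mat3 := Real.sqrt (3/2) • (vecMulVec e3 e3 - (1/3 : ℝ) • (1 : Mat3))
def E1 (k : ℤ) (φ : ℝ) : Mat3 :=
  Real.sqrt 2 • (vecMulVec (nvec k φ) (nvec k φ) - (1/2 : ℝ) • I2)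
def E2mat (k : ℤ) (φ : ℝ) : Mat3 :=
  (Real.sqrt 2)⁻¹ • (vecMulVec (nvec k φ) (mvec k φ) + vecMulVec (mvec k φ) (nvec k φ))
def E3mat : Mat3 := (Real.sqrt 2)⁻¹ • (vecMulVec e1 e3 + vecMulVec e3 e1)
def E4mat : Mat3 := (Real.sqrt 2)⁻¹ • (vecMulVec e2 e3 + vecMulVec e3 e2)

/-- The rotation `R_k(ψ)` of winding `k/2` about the vertical axis. -/
def Rk (k : ℤ) (ψ : ℝ) : Mat3 :=
  !![Real.cos ((k : ℝ) * ψ / 2), -Real.sin ((k : ℝ) * ψ / 2), 0;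
     Real.sin ((k : ℝ) * ψ / 2),  Real.cos ((k : ℝ) * ψ / 2), 0;
     0, 0, 1]

/-- The Landau-de Gennes bulk potential. -/
def fbulk (a2 b2 c2 : ℝ) (Q : Mat3) : ℝ :=
  -(a2/2) * (Q*Q).trace - (b2/3) * (Q*Q*Q).trace + (c2/4) * ((Q*Q).trace)^2

/-- The constant `s₊ = (b² + √(b⁴ + 24a²c²))/(4c²)`. -/
def splus (a2 b2 c2 : ℝ) : ℝ := (b2 + Real.sqrt (b2^2 + 24*a2*c2)) / (4*c2)

/-- Laplacian of a scalar function on `ℝ²`, as the sum of the two repeated partial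
derivatives along the coordinate axes. -/
def lap (f : ℝ × ℝ → ℝ) (p : ℝ × ℝ) : ℝ :=
  deriv (fun t => deriv (fun s => f (s, p.2)) t) p.1 +
  deriv (fun t => deriv (fun s => f (p.1, s)) t) p.2

/-- Componentwise Laplacian of a matrix-valued map on `ℝ²`. -/
def matLap (Q : ℝ × ℝ → Mat3) (p : ℝ × ℝ) : Mat3 :=
  Matrix.of fun i j => lap (fun x => Q x i j) p

/-- Squared norm of the gradient of a scalar function on `ℝ²`. -/
def gradNormSq (f : ℝ × ℝ → ℝ) (p : ℝ × ℝ) : ℝ :=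
  (fderiv ℝ f p (1, 0))^2 + (fderiv ℝ f p (0, 1))^2

/-- `|∇Q|²`: sum over all matrix entries of the squared norms of their gradients. -/
def matGradNormSq (Q : ℝ × ℝ → Mat3) (p : ℝ × ℝ) : ℝ :=
  ∑ i, ∑ j, gradNormSq (fun x => Q x i j) p

/-- Membership in the open disk of radius `R ∈ (0,∞]` centered at the origin. -/
def inBall (R : ℝ≥0∞) (x : ℝ × ℝ) : Prop :=
  ENNReal.ofReal (Real.sqrt (x.1^2 + x.2^2)) < R

/-- The right-hand side of the Euler–Lagrange equation
`ΔQ = −a²Q − b²(Q² − (1/3)|Q|²I₃) + c²|Q|²Q`. -/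
def ELrhs (a2 b2 c2 : ℝ) (A : Mat3) : Mat3 :=
  -a2 • A - b2 • (A * A - ((1/3 : ℝ) * (A * A).trace) • (1 : Mat3)) + (c2 * (A * A).trace) • A

/-- Frobenius squared norm of a 3×3 matrix. -/
def frobSq (A : Mat3) : ℝ := ∑ i, ∑ j, (A i j)^2

/-- For `x = (x₁,x₂) ∈ ℝ²`, `x̃ = (x₁,x₂,0) ∈ ℝ³`. -/
def tilde (x : ℝ × ℝ) : Fin 3 → ℝ := ![x.1, x.2, 0]

/-- The projection `P₂(x₁,x₂,x₃) = (x₁,x₂)`. -/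
def P2 (v : Fin 3 → ℝ) : ℝ × ℝ := (v 0, v 1)

/-- The antisymmetric matrix `S₀ = e₂⊗e₁ − e₁⊗e₂`. -/
def S0mat : Mat3 := vecMulVec e2 e1 - vecMulVec e1 e2

end

/-- The Laplacian on the positive `x`-axis of a function whose restriction to the circle of
radius `r` is a constant plus a Fourier mode of frequency `κ`. -/
lemma lap_of_fourier_mode_on_circle {f : ℝ × ℝ → ℝ} (hf : ContDiff ℝ 2 f) {r κ e c d : ℝ}
    (h : ∀ φ, f (r * Real.cos φ, r * Real.sin φ)
      = e + c * Real.cos (κ * φ) + d * Real.sin (κ * φ)) :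
    r ^ 2 * lap f (r, 0) = r ^ 2 * deriv (deriv fun t => f (t, 0)) r
      + r * deriv (fun t => f (t, 0)) r - κ ^ 2 * c := by
  have hfd : ∀ p, HasFDerivAt f (fderiv ℝ f p) p := fun p =>
    (hf.differentiable (by norm_num) p).hasFDerivAt
  have hf' : ContDiff ℝ 1 (fderiv ℝ f) := hf.fderiv_right (by norm_num)
  have hpart : ∀ v p, HasFDerivAt (fun x => fderiv ℝ f x v)
      (fderiv ℝ (fun x => fderiv ℝ f x v) p) p := fun v p =>
    ((hf'.clm_apply contDiff_const).differentiable (by norm_num) p).hasFDerivAt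
  have hlin : ∀ (L : ℝ × ℝ →L[ℝ] ℝ) (x y : ℝ), L (x, y) = x * L (1, 0) + y * L (0, 1) := by
    intro L x y
    have : ((x, y) : ℝ × ℝ) = x • (1, 0) + y • (0, 1) := by simp
    rw [this, map_add, map_smul, map_smul, smul_eq_mul, smul_eq_mul]
  have hvert : ∀ s, HasDerivAt (fun s : ℝ => ((r, s) : ℝ × ℝ)) (0, 1) s := fun s =>
    (hasDerivAt_const s r).prodMk (hasDerivAt_id s)
  have hhor : ∀ t, HasDerivAt (fun t : ℝ => ((t, 0) : ℝ × ℝ)) (1, 0) t := fun t =>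
    (hasDerivAt_id t).prodMk (hasDerivAt_const t (0 : ℝ))
  have hcirc : ∀ φ, HasDerivAt (fun φ : ℝ => ((r * Real.cos φ, r * Real.sin φ) : ℝ × ℝ))
      (r * -Real.sin φ, r * Real.cos φ) φ := fun φ =>
    ((Real.hasDerivAt_cos φ).const_mul r).prodMk ((Real.hasDerivAt_sin φ).const_mul r)
  have hx : deriv (fun t => f (t, 0)) r = fderiv ℝ f (r, 0) (1, 0) :=
    ((hfd (r, 0)).comp_hasDerivAt r (hhor r)).deriv
  have hy : (deriv fun s => f (r, s)) = fun s => fderiv ℝ f (r, s) (0, 1) :=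
    funext fun s => ((hfd (r, s)).comp_hasDerivAt s (hvert s)).deriv
  have hyy : deriv (deriv fun s => f (r, s)) 0
      = fderiv ℝ (fun x => fderiv ℝ f x (0, 1)) (r, 0) (0, 1) := by
    rw [hy]
    exact ((hpart (0, 1) (r, 0)).comp_hasDerivAt 0 (hvert 0)).deriv
  have hG : ∀ φ, HasDerivAt (fun φ => f (r * Real.cos φ, r * Real.sin φ))
      (r * -Real.sin φ * fderiv ℝ f (r * Real.cos φ, r * Real.sin φ) (1, 0)
        + r * Real.cos φ * fderiv ℝ f (r * Real.cos φ, r * Real.sin φ) (0, 1)) φ := by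
    intro φ
    have := (hfd (r * Real.cos φ, r * Real.sin φ)).comp_hasDerivAt φ (hcirc φ)
    rwa [hlin] at this
  have hF : ∀ φ, HasDerivAt (fun φ => e + c * Real.cos (κ * φ) + d * Real.sin (κ * φ))
      (κ * (-c * Real.sin (κ * φ) + d * Real.cos (κ * φ))) φ := by
    intro φ
    have hm : HasDerivAt (fun φ : ℝ => κ * φ) κ φ := by
      simpa using (hasDerivAt_id φ).const_mul κ
    have := ((hm.cos.const_mul c).const_add e).add (hm.sin.const_mul d)
    exact this.congr_deriv (by ring)
  have hGF : (fun φ => r * -Real.sin φ * fderiv ℝ f (r * Real.cos φ, r * Real.sin φ) (1, 0)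
        + r * Real.cos φ * fderiv ℝ f (r * Real.cos φ, r * Real.sin φ) (0, 1))
      = fun φ => κ * (-c * Real.sin (κ * φ) + d * Real.cos (κ * φ)) := by
    funext φ
    have := hG φ
    simp only [h] at this
    exact this.unique (hF φ)
  have hF2 : HasDerivAt (fun φ => κ * (-c * Real.sin (κ * φ) + d * Real.cos (κ * φ)))
      (-κ ^ 2 * c) 0 := by
    have hm : HasDerivAt (fun φ : ℝ => κ * φ) κ 0 := by
      simpa using (hasDerivAt_id (0 : ℝ)).const_mul κ
    have := ((hm.sin.const_mul (-c)).add (hm.cos.const_mul d)).const_mul κ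
    refine this.congr_deriv ?_
    simp
    ring
  have hG2 : HasDerivAt
      (fun φ => r * -Real.sin φ * fderiv ℝ f (r * Real.cos φ, r * Real.sin φ) (1, 0)
        + r * Real.cos φ * fderiv ℝ f (r * Real.cos φ, r * Real.sin φ) (0, 1))
      (-r * fderiv ℝ f (r, 0) (1, 0)
        + r ^ 2 * fderiv ℝ (fun x => fderiv ℝ f x (0, 1)) (r, 0) (0, 1)) 0 := by
    have h1 := fun v => (hpart v (r * Real.cos 0, r * Real.sin 0)).comp_hasDerivAt 0 (hcirc 0)
    have := (((Real.hasDerivAt_sin 0).neg.const_mul r).mul (h1 (1, 0))).add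
      (((Real.hasDerivAt_cos 0).const_mul r).mul (h1 (0, 1)))
    refine this.congr_deriv ?_
    simp only [hlin _ (r * -Real.sin 0), Function.comp_apply]
    simp
    ring
  rw [hGF] at hG2
  have key := hG2.unique hF2
  have hlap : lap f (r, 0) = deriv (deriv fun t => f (t, 0)) r
      + deriv (deriv fun s => f (r, s)) 0 := rfl
  rw [hlap, hyy, hx]
  linear_combination key

/-- Backward uniqueness for a second order linear scalar equation on `(0, ∞)`. -/
lemma eq_zero_of_linear_ode_of_eventually_eq_zero {y y' p q : ℝ → ℝ}
    (hp : ContinuousOn p (Set.Ioi 0)) (hq : ContinuousOn q (Set.Ioi 0))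
    (hy : ∀ t, 0 < t → HasDerivAt y (y' t) t)
    (hy' : ∀ t, 0 < t → HasDerivAt y' (p t * y t + q t * y' t) t)
    (hzero : ∀ᶠ t in Filter.atTop, y t = 0) {r : ℝ} (hr : 0 < r) : y r = 0 := by
  obtain ⟨R, hR⟩ := Filter.eventually_atTop.1 hzero
  set T := max R r + 1
  have hrT : r < T := lt_of_le_of_lt (le_max_right R r) (lt_add_one _)
  have hRT : R < T := lt_of_le_of_lt (le_max_left R r) (lt_add_one _)
  have hT0 : 0 < T := hr.trans hrT
  have hyT : y T = 0 := hR T hRT.le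
  have hy'T : y' T = 0 := by
    have h0 : HasDerivAt y 0 T := (hasDerivAt_const T (0 : ℝ)).congr_of_eventuallyEq
      (Filter.eventually_of_mem (Ioi_mem_nhds hRT) fun t ht => hR t (le_of_lt ht))
    exact (hy T hT0).unique h0
  have hsub : Set.Icc r T ⊆ Set.Ioi 0 := fun t ht => hr.trans_le ht.1
  obtain ⟨P, hP⟩ := isCompact_Icc.exists_bound_of_continuousOn (hp.mono hsub)
  obtain ⟨S, hS⟩ := isCompact_Icc.exists_bound_of_continuousOn (hq.mono hsub)
  have hP0 : 0 ≤ P := (norm_nonneg _).trans (hP r ⟨le_rfl, hrT.le⟩)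
  have hS0 : 0 ≤ S := (norm_nonneg _).trans (hS r ⟨le_rfl, hrT.le⟩)
  have hlip : ∀ t ∈ Set.Ioc r T, LipschitzOnWith (Real.toNNReal (1 + P + S))
      (fun z : ℝ × ℝ => (z.2, p t * z.1 + q t * z.2)) Set.univ := by
    intro t ht
    have ht' : t ∈ Set.Icc r T := ⟨ht.1.le, ht.2⟩
    refine LipschitzOnWith.of_dist_le_mul fun z _ w _ => ?_
    rw [Real.coe_toNNReal _ (by positivity), dist_eq_norm, dist_eq_norm]
    have h1 : |z.1 - w.1| ≤ ‖z - w‖ := norm_fst_le (z - w)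
    have h2 : |z.2 - w.2| ≤ ‖z - w‖ := norm_snd_le (z - w)
    have hn := norm_nonneg (z - w)
    refine norm_prod_le_iff.2 ⟨?_, ?_⟩
    · refine h2.trans ?_
      nlinarith [mul_nonneg hP0 hn, mul_nonneg hS0 hn]
    · have : (p t * z.1 + q t * z.2) - (p t * w.1 + q t * w.2)
          = p t * (z.1 - w.1) + q t * (z.2 - w.2) := by ring
      change |(p t * z.1 + q t * z.2) - (p t * w.1 + q t * w.2)| ≤ _
      rw [this]
      have h3 : |p t * (z.1 - w.1)| ≤ P * ‖z - w‖ := by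
        rw [abs_mul]
        exact mul_le_mul (hP t ht') h1 (abs_nonneg _) hP0
      have h4 : |q t * (z.2 - w.2)| ≤ S * ‖z - w‖ := by
        rw [abs_mul]
        exact mul_le_mul (hS t ht') h2 (abs_nonneg _) hS0
      linarith [abs_add_le (p t * (z.1 - w.1)) (q t * (z.2 - w.2))]
  have hsol : ∀ t, 0 < t → HasDerivAt (fun t => (y t, y' t)) (y' t, p t * y t + q t * y' t) t :=
    fun t ht => (hy t ht).prodMk (hy' t ht)
  have huniq : Set.EqOn (fun t => (y t, y' t)) (fun _ => ((0 : ℝ), (0 : ℝ))) (Set.Icc r T) := by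
    refine ODE_solution_unique_of_mem_Icc_left
      (v := fun t (z : ℝ × ℝ) => (z.2, p t * z.1 + q t * z.2)) hlip
      (fun t ht => (hsol t (hsub ht)).continuousAt.continuousWithinAt)
      (fun t ht => (hsol t (hr.trans ht.1)).hasDerivWithinAt) (fun _ _ => Set.mem_univ _)
      continuousOn_const (fun t _ => ?_) (fun _ _ => Set.mem_univ _) (by simp [hyT, hy'T])
    have := (hasDerivAt_const t ((0 : ℝ), (0 : ℝ))).hasDerivWithinAt (s := Set.Iic t)
    exact this.congr_deriv (by ext <;> simp)
  exact congrArg Prod.fst (huniq ⟨le_rfl, hrT.le⟩)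

/-- Two `C²` solutions on `[0, ∞)` of the same Bessel type equation are proportional, so the one
which vanishes at infinity is zero if the other one has a positive limit. -/
lemma eq_zero_of_bessel_of_tendsto {u v P : ℝ → ℝ} {κ l : ℝ}
    (hu : ContDiff ℝ 2 u) (hv : ContDiff ℝ 2 v) (hP : Continuous P)
    (hueq : ∀ t, 0 < t → t ^ 2 * deriv (deriv u) t + t * deriv u t - κ ^ 2 * u t
      = t ^ 2 * (P t * u t))
    (hveq : ∀ t, 0 < t → t ^ 2 * deriv (deriv v) t + t * deriv v t - κ ^ 2 * v t
      = t ^ 2 * (P t * v t))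
    (hl : 0 < l) (hulim : Filter.Tendsto u Filter.atTop (nhds l))
    (hvlim : Filter.Tendsto v Filter.atTop (nhds 0)) {r : ℝ} (hr : 0 < r) : v r = 0 := by
  have hd : ∀ {g : ℝ → ℝ}, ContDiff ℝ 2 g → ∀ t, HasDerivAt g (deriv g t) t := fun hg t =>
    (hg.differentiable (by norm_num) t).hasDerivAt
  have hd2 : ∀ {g : ℝ → ℝ}, ContDiff ℝ 2 g →
      ∀ t, HasDerivAt (deriv g) (deriv (deriv g) t) t := fun hg t =>
    ((hg.differentiable_deriv_two) t).hasDerivAt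
  set W : ℝ → ℝ := fun t => t * (u t * deriv v t - v t * deriv u t) with hW
  have hWd : ∀ t, HasDerivAt W (1 * (u t * deriv v t - v t * deriv u t)
      + t * ((deriv u t * deriv v t + u t * deriv (deriv v) t)
        - (deriv v t * deriv u t + v t * deriv (deriv u) t))) t := fun t =>
    (hasDerivAt_id t).mul (((hd hu t).mul (hd2 hv t)).sub ((hd hv t).mul (hd2 hu t)))
  have hW0 : ∀ t, 0 < t → W t = 0 := by
    intro T hT
    have hder : ∀ t ∈ Set.Ioo 0 T, deriv W t = 0 := by
      intro t ht
      rw [(hWd t).deriv]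
      refine mul_left_cancel₀ ht.1.ne' ?_
      linear_combination u t * hveq t ht.1 - v t * hueq t ht.1
    obtain ⟨s, hs, hs'⟩ := exists_deriv_eq_slope W hT
      (fun t _ => (hWd t).continuousAt.continuousWithinAt)
      (fun t _ => (hWd t).differentiableAt.differentiableWithinAt)
    rw [hder s hs, eq_comm, div_eq_zero_iff] at hs'
    have hWz : W 0 = 0 := by simp [hW]
    rcases hs' with h | h <;> linarith
  have hzero : ∀ᶠ t in Filter.atTop, v t = 0 := by
    obtain ⟨R, hR⟩ := Filter.eventually_atTop.1
      ((hulim.eventually (lt_mem_nhds hl)).and (Filter.eventually_gt_atTop 0))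
    have hquot : Filter.Tendsto (fun t => v t / u t) Filter.atTop (nhds 0) := by
      have := hvlim.div hulim hl.ne'
      rwa [zero_div] at this
    have hconst : ∀ t, R ≤ t → v t / u t = v R / u R := by
      intro T hT
      refine constant_of_has_deriv_right_zero (a := R) (b := T) (f := fun t => v t / u t)
        (fun t ht => ?_) (fun t ht => ?_) T ⟨hT, le_rfl⟩
      · exact ((hd hv t).div (hd hu t) (hR t ht.1).1.ne').continuousAt.continuousWithinAt
      · have hw : u t * deriv v t - v t * deriv u t = 0 :=
          (mul_eq_zero.1 (hW0 t (hR t ht.1).2)).resolve_left (hR t ht.1).2.ne'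
        refine (((hd hv t).div (hd hu t) (hR t ht.1).1.ne').congr_deriv ?_).hasDerivWithinAt
        rw [div_eq_zero_iff]
        left
        linear_combination hw
    have hlim : v R / u R = 0 := by
      refine tendsto_nhds_unique ?_ hquot
      refine Filter.Tendsto.congr' ?_ tendsto_const_nhds
      exact Filter.eventually_atTop.2 ⟨R, fun t ht => (hconst t ht).symm⟩
    refine Filter.eventually_atTop.2 ⟨R, fun t ht => ?_⟩
    have := (hconst t ht).trans hlim
    exact (div_eq_zero_iff.1 this).resolve_right (hR t ht).1.ne'
  refine eq_zero_of_linear_ode_of_eventually_eq_zero (y' := deriv v)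
    (p := fun t => κ ^ 2 / t ^ 2 + P t) (q := fun t => -(1 / t)) ?_ ?_ (fun t _ => hd hv t)
    (fun t ht => ?_) hzero hr
  · refine (continuousOn_const.div (by fun_prop) fun t ht => ?_).add hP.continuousOn
    exact pow_ne_zero 2 (ne_of_gt ht)
  · exact (continuousOn_const.div continuousOn_id fun t ht => ne_of_gt ht).neg
  · refine (hd2 hv t).congr_deriv ?_
    have := hveq t ht
    field_simp
    linear_combination this

/-- The entries of a `k`-radially symmetric tensor. -/
lemma radial_entries {A : Mat3} {k : ℤ} {φ x y z : ℝ}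
    (hA : A = x • E0 + y • E1 k φ + z • E2mat k φ) :
    A 0 0 = -(Real.sqrt (3 / 2) / 3) * x + y / Real.sqrt 2 * Real.cos (k * φ)
        + -(z / Real.sqrt 2) * Real.sin (k * φ) ∧
    A 1 1 = -(Real.sqrt (3 / 2) / 3) * x + -(y / Real.sqrt 2) * Real.cos (k * φ)
        + z / Real.sqrt 2 * Real.sin (k * φ) ∧
    A 0 1 = 0 + z / Real.sqrt 2 * Real.cos (k * φ) + y / Real.sqrt 2 * Real.sin (k * φ) ∧
    A 1 0 = A 0 1 ∧ A 0 2 = 0 ∧ A 2 0 = 0 ∧ A 1 2 = 0 ∧ A 2 1 = 0 := by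
  have hs : Real.sqrt 2 ^ 2 = 2 := Real.sq_sqrt (by norm_num)
  have hs0 : Real.sqrt 2 ≠ 0 := by positivity
  have hk : (k : ℝ) * φ = 2 * (k * φ / 2) := by ring
  have hcs := Real.sin_sq_add_cos_sq ((k : ℝ) * φ / 2)
  rw [hk, Real.cos_two_mul, Real.sin_two_mul]
  subst hA
  simp only [E0, E1, E2mat, I2, e3, nvec, mvec, vecMulVec, Matrix.add_apply, Matrix.smul_apply,
    Matrix.sub_apply, Matrix.of_apply, smul_eq_mul]
  refine ⟨?_, ?_, ?_, ?_, ?_, ?_, ?_, ?_⟩ <;> simp <;> field_simp <;> rw [hs]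
  · ring
  · linear_combination 12 * y * hcs
  · linear_combination -z * hcs
  · ring

/-- On matrices which are block diagonal with respect to `span(e₁, e₂) ⊕ span(e₃)`, the right-hand
side of the Euler–Lagrange equation acts as the same scalar on both in-plane components. -/
lemma ELrhs_block (a2 b2 c2 : ℝ) {A : Mat3} (h10 : A 1 0 = A 0 1) (h02 : A 0 2 = 0)
    (h20 : A 2 0 = 0) (h12 : A 1 2 = 0) (h21 : A 2 1 = 0) :
    ELrhs a2 b2 c2 A 0 0 - ELrhs a2 b2 c2 A 1 1
      = (-a2 - b2 * (A 0 0 + A 1 1) + c2 * (A * A).trace) * (A 0 0 - A 1 1) ∧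
    ELrhs a2 b2 c2 A 0 1
      = (-a2 - b2 * (A 0 0 + A 1 1) + c2 * (A * A).trace) * A 0 1 := by
  have hAA : ∀ i j, (A * A) i j = A i 0 * A 0 j + A i 1 * A 1 j + A i 2 * A 2 j := fun i j => by
    rw [Matrix.mul_apply, Fin.sum_univ_three]
  generalize hτ : (A * A).trace = τ
  simp [ELrhs, hAA, hτ, h10, h02, h20, h12, h21]
  constructor <;> ring

/-- for a `k`-radially symmetric `C²` solution of the Euler–Lagrange
equation on all of `ℝ²` with `w₁(∞) = s₊/√2` and `w₂(∞) = 0`, one has `w₂ ≡ 0`, i.e.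
`Q = w₀(r)E₀ + w₁(r)E₁(φ)`. -/
theorem stmt15 (a2 b2 c2 : ℝ) (ha : 0 < a2) (hb : 0 < b2) (hc : 0 < c2)
    (k : ℤ) (hk : k ≠ 0)
    (w₀ w₁ w₂ : ℝ → ℝ)
    (hw₀ : ContDiffOn ℝ 2 w₀ (Set.Ioi 0))
    (hw₁ : ContDiffOn ℝ 2 w₁ (Set.Ioi 0))
    (hw₂ : ContDiffOn ℝ 2 w₂ (Set.Ioi 0))
    (Q : ℝ × ℝ → Mat3)
    (hQreg : ∀ i j, ContDiff ℝ 2 (fun x => Q x i j))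
    (hQ : ∀ r φ : ℝ, 0 < r →
      Q (r * Real.cos φ, r * Real.sin φ) = w₀ r • E0 + w₁ r • E1 k φ + w₂ r • E2mat k φ)
    (hEL : ∀ x, matLap Q x = ELrhs a2 b2 c2 (Q x))
    (hw₁lim : Filter.Tendsto w₁ Filter.atTop (nhds (splus a2 b2 c2 / Real.sqrt 2)))
    (hw₂lim : Filter.Tendsto w₂ Filter.atTop (nhds 0)) :
    (∀ r : ℝ, 0 < r → w₂ r = 0) ∧
    (∀ r φ : ℝ, 0 < r →
      Q (r * Real.cos φ, r * Real.sin φ) = w₀ r • E0 + w₁ r • E1 k φ) := by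
  have hent := fun (r φ : ℝ) (hr : 0 < r) => radial_entries (hQ r φ hr)
  have haxis : ∀ t : ℝ, ((t * Real.cos 0, t * Real.sin 0) : ℝ × ℝ) = (t, 0) := fun t => by simp
  have hax := fun t (ht : 0 < t) => haxis t ▸ hent t 0 ht
  have hs0 : Real.sqrt 2 ≠ 0 := by positivity
  have hs2 : Real.sqrt 2 ^ 2 = 2 := Real.sq_sqrt (by norm_num)
  have hq : ∀ i j, ContDiff ℝ 2 fun t : ℝ => Q (t, 0) i j := fun i j =>
    (hQreg i j).comp (contDiff_id.prodMk contDiff_const)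
  have hu : ∀ t, 0 < t → Q (t, 0) 0 0 - Q (t, 0) 1 1 = Real.sqrt 2 * w₁ t := by
    intro t ht
    obtain ⟨h00, h11, -⟩ := hax t ht
    rw [h00, h11]
    simp
    field_simp
    linear_combination -w₁ t * hs2
  have hv : ∀ t, 0 < t → Q (t, 0) 0 1 = w₂ t / Real.sqrt 2 := by
    intro t ht
    obtain ⟨-, -, h01, -⟩ := hax t ht
    rw [h01]
    simp
  have hl : 0 < splus a2 b2 c2 := by
    unfold splus
    positivity
  have hvzero : ∀ r, 0 < r → Q (r, 0) 0 1 = 0 := by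
    intro r hr
    refine eq_zero_of_bessel_of_tendsto (κ := k) (l := splus a2 b2 c2)
      (u := fun t => Q (t, 0) 0 0 - Q (t, 0) 1 1) (v := fun t => Q (t, 0) 0 1)
      (P := fun t => -a2 - b2 * (Q (t, 0) 0 0 + Q (t, 0) 1 1)
        + c2 * (Q (t, 0) * Q (t, 0)).trace)
      ((hq 0 0).sub (hq 1 1)) (hq 0 1) ?_ (fun t ht => ?_) (fun t ht => ?_) hl ?_ ?_ hr
    · have hc := fun i j => (hq i j).continuous
      simp only [Matrix.trace, Matrix.diag_apply, Matrix.mul_apply]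
      fun_prop
    · obtain ⟨h00, h11, h01, h10, h02, h20, h12, h21⟩ := hax t ht
      have hlap0 := lap_of_fourier_mode_on_circle (hQreg 0 0) fun φ => (hent t φ ht).1
      have hlap1 := lap_of_fourier_mode_on_circle (hQreg 1 1) fun φ => (hent t φ ht).2.1
      have hEL0 : lap (fun x => Q x 0 0) (t, 0) = _ := congrFun (congrFun (hEL (t, 0)) 0) 0
      have hEL1 : lap (fun x => Q x 1 1) (t, 0) = _ := congrFun (congrFun (hEL (t, 0)) 1) 1
      have hb := (ELrhs_block a2 b2 c2 h10 h02 h20 h12 h21).1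
      have hd1 : deriv (fun t => Q (t, 0) 0 0 - Q (t, 0) 1 1)
          = fun t => deriv (fun t => Q (t, 0) 0 0) t - deriv (fun t => Q (t, 0) 1 1) t :=
        funext fun t => deriv_fun_sub ((hq 0 0).differentiable (by norm_num) t)
          ((hq 1 1).differentiable (by norm_num) t)
      have hd2 : deriv (deriv fun t => Q (t, 0) 0 0 - Q (t, 0) 1 1) t
          = deriv (deriv fun t => Q (t, 0) 0 0) t - deriv (deriv fun t => Q (t, 0) 1 1) t := by
        rw [hd1]
        exact deriv_fun_sub ((hq 0 0).differentiable_deriv_two t)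
          ((hq 1 1).differentiable_deriv_two t)
      have hdiff : Q (t, 0) 0 0 - Q (t, 0) 1 1 = 2 * (w₁ t / Real.sqrt 2) := by
        rw [h00, h11]
        simp
        ring
      rw [hd2, hd1, ← hb, ← hEL0, ← hEL1]
      linear_combination hlap1 - hlap0 - (k : ℝ) ^ 2 * hdiff
    · obtain ⟨h00, h11, h01, h10, h02, h20, h12, h21⟩ := hax t ht
      have hlap0 := lap_of_fourier_mode_on_circle (hQreg 0 1) fun φ => (hent t φ ht).2.2.1
      have hEL0 : lap (fun x => Q x 0 1) (t, 0) = _ := congrFun (congrFun (hEL (t, 0)) 0) 1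
      have hb := (ELrhs_block a2 b2 c2 h10 h02 h20 h12 h21).2
      rw [← hb, ← hEL0]
      linear_combination -hlap0 - (k : ℝ) ^ 2 * hv t ht
    · have := hw₁lim.const_mul (Real.sqrt 2)
      rw [mul_div_cancel₀ _ hs0] at this
      refine this.congr' ?_
      filter_upwards [Filter.eventually_gt_atTop 0] with t ht using (hu t ht).symm
    · have := hw₂lim.div_const (Real.sqrt 2)
      rw [zero_div] at this
      refine this.congr' ?_
      filter_upwards [Filter.eventually_gt_atTop 0] with t ht using (hv t ht).symm
  have hw₂zero : ∀ r, 0 < r → w₂ r = 0 := fun r hr =>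
    (div_eq_zero_iff.1 ((hv r hr).symm.trans (hvzero r hr))).resolve_right hs0
  refine ⟨hw₂zero, fun r φ hr => ?_⟩
  rw [hQ r φ hr, hw₂zero r hr, zero_smul, add_zero]
end

section
/- Let a²,b²,c² > 0 and k ∈ ℤ∖{0}. There exists a smooth map Q : ℝ² → S₀ of the form Q(x) = u(|x|)·√2(n(x)⊗n(x) − (1/2)I₂) + v(|x|)·√(3/2)(e₃⊗e₃ − (1/3)I₃), with u ∈ C²([0,∞)) ∩ C^∞((0,∞)), v ∈ C^∞([0,∞)), u > 0 and v < 0 on (0,∞), such that Q satisfies the Euler–Lagrange equation ΔQ = −a²Q − b²(Q² − (1/3)|Q|²I₃) + c²|Q|²Q on all of ℝ² (Laplacian acting componentwise), and such that |Q(x) − s₊(n(x)⊗n(x) − (1/3)I₃)| → 0 as |x| → ∞. -/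
open Real Matrix
open scoped ENNReal

section
open MeasureTheory Set Filter Topology

/-- The weighted average `∫₀¹ σ^κ g(tσ) dσ`. -/
noncomputable def powerMean (κ : ℕ) (g : ℝ → ℝ) (t : ℝ) : ℝ :=
  ∫ σ in (0 : ℝ)..1, σ ^ κ * g (t * σ)

lemma powerMean_congr {κ : ℕ} {f g : ℝ → ℝ} (h : ∀ x, 0 < x → f x = g x) {t : ℝ} (ht : 0 < t) :
    powerMean κ f t = powerMean κ g t := by
  unfold powerMean
  refine intervalIntegral.integral_congr_ae (Eventually.of_forall fun σ hσ => ?_)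
  rw [uIoc_of_le zero_le_one] at hσ
  rw [h _ (mul_pos ht hσ.1)]

lemma continuous_powerMean (κ : ℕ) {g : ℝ → ℝ} (hg : Continuous g) :
    Continuous (powerMean κ g) := by
  unfold powerMean
  exact intervalIntegral.continuous_parametric_intervalIntegral_of_continuous'
    (f := fun t σ => σ ^ κ * g (t * σ)) (by fun_prop) 0 1

lemma hasDerivAt_powerMean (κ : ℕ) {g g' : ℝ → ℝ} (hg : ∀ x, HasDerivAt g (g' x) x)
    (hg' : Continuous g') (t : ℝ) :
    HasDerivAt (powerMean κ g) (powerMean (κ + 1) g' t) t := by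
  have hgc : Continuous g := continuous_iff_continuousAt.2 fun x => (hg x).continuousAt
  obtain ⟨C, hC⟩ := (isCompact_Icc (a := -(|t| + 1)) (b := |t| + 1)).exists_bound_of_continuousOn
    hg'.continuousOn
  refine (intervalIntegral.hasDerivAt_integral_of_dominated_loc_of_deriv_le
    (F := fun t σ => σ ^ κ * g (t * σ)) (F' := fun t σ => σ ^ (κ + 1) * g' (t * σ))
    (bound := fun _ => C) (Metric.ball_mem_nhds t one_pos) ?_ ?_ ?_ ?_ ?_ ?_).2
  · exact Eventually.of_forall fun x => (by fun_prop : Continuous _).aestronglyMeasurable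
  · exact (by fun_prop : Continuous _).intervalIntegrable _ _
  · exact (by fun_prop : Continuous _).aestronglyMeasurable
  · refine Eventually.of_forall fun σ hσ x hx => ?_
    rw [uIoc_of_le zero_le_one] at hσ
    have hx' : |x| ≤ |t| + 1 := by
      rw [Metric.mem_ball, Real.dist_eq] at hx
      have := abs_sub_abs_le_abs_sub x t
      linarith
    have h1 : |x * σ| ≤ |t| + 1 := by
      rw [abs_mul, abs_of_pos hσ.1]
      nlinarith [abs_nonneg x, hσ.2]
    have h2 := hC (x * σ) (abs_le.1 h1)
    rw [norm_mul, norm_pow, Real.norm_eq_abs σ, abs_of_pos hσ.1]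
    have h3 : σ ^ (κ + 1) ≤ 1 := pow_le_one₀ hσ.1.le hσ.2
    calc σ ^ (κ + 1) * ‖g' (x * σ)‖ ≤ 1 * ‖g' (x * σ)‖ := by gcongr
      _ ≤ C := by linarith
  · exact intervalIntegrable_const
  · refine Eventually.of_forall fun σ _ x _ => ?_
    have h := ((hg (x * σ)).comp x (hasDerivAt_mul_const σ)).const_mul (σ ^ κ)
    exact h.congr_deriv (by ring)

lemma contDiff_powerMean (n : ℕ) : ∀ (κ : ℕ) {g : ℝ → ℝ}, ContDiff ℝ n g →
    ContDiff ℝ n (powerMean κ g) := by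
  induction n with
  | zero =>
    intro κ g hg
    exact contDiff_zero.2 (continuous_powerMean κ (contDiff_zero.1 hg))
  | succ n ih =>
    intro κ g hg
    have hg1 := contDiff_succ_iff_deriv.1 (by exact_mod_cast hg : ContDiff ℝ ((n : WithTop ℕ∞) + 1) g)
    have hd := hasDerivAt_powerMean κ (fun x => (hg1.1 x).hasDerivAt) hg1.2.2.continuous
    have : ContDiff ℝ ((n : WithTop ℕ∞) + 1) (powerMean κ g) := by
      refine contDiff_succ_iff_deriv.2 ⟨fun x => (hd x).differentiableAt, by simp, ?_⟩
      rw [funext fun x => (hd x).deriv]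
      exact ih _ hg1.2.2
    exact_mod_cast this

lemma powerMean_eq_integral (κ : ℕ) (g : ℝ → ℝ) (t : ℝ) :
    t ^ (κ + 1) * powerMean κ g t = ∫ s in (0 : ℝ)..t, s ^ κ * g s := by
  have h := intervalIntegral.smul_integral_comp_mul_left (a := 0) (b := 1)
    (fun s => s ^ κ * g s) t
  rw [mul_zero, mul_one] at h
  rw [← h, powerMean, smul_eq_mul, pow_succ', mul_assoc, ← intervalIntegral.integral_const_mul]
  congr 1
  refine intervalIntegral.integral_congr fun σ _ => ?_
  simp only [mul_pow]; ring

lemma powerMean_euler (κ : ℕ) {g g' : ℝ → ℝ} (hg : ∀ x, HasDerivAt g (g' x) x)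
    (hg' : Continuous g') {t : ℝ} (ht : 0 < t) :
    t * powerMean (κ + 1) g' t + (κ + 1) * powerMean κ g t = g t := by
  have hgc : Continuous g := continuous_iff_continuousAt.2 fun x => (hg x).continuousAt
  have h1 : HasDerivAt (fun t => t ^ (κ + 1) * powerMean κ g t)
      (((κ + 1 : ℕ) : ℝ) * t ^ κ * powerMean κ g t + t ^ (κ + 1) * powerMean (κ + 1) g' t) t := by
    simpa using (hasDerivAt_pow (κ + 1) t).fun_mul (hasDerivAt_powerMean κ hg hg' t)
  have hc : Continuous fun s => s ^ κ * g s := by fun_prop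
  have h2 : HasDerivAt (fun t => ∫ s in (0 : ℝ)..t, s ^ κ * g s) (t ^ κ * g t) t :=
    intervalIntegral.integral_hasDerivAt_right (hc.intervalIntegrable _ _)
      (hc.stronglyMeasurableAtFilter _ _) hc.continuousAt
  rw [← funext (powerMean_eq_integral κ g)] at h2
  have h4 := h1.unique h2
  have h5 : t ^ κ ≠ 0 := (pow_pos ht κ).ne'
  apply mul_left_cancel₀ h5
  rw [← h4]; push_cast; ring

/-- `C * (1 + x)` bounds `|f x|` on the positive half-line, and `f` is measurable. -/
structure LinearGrowth (C : ℝ) (f : ℝ → ℝ) : Prop where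
  measurable : Measurable f
  bound : ∀ x, 0 < x → |f x| ≤ C * (1 + x)

lemma LinearGrowth.nonneg {C : ℝ} {f : ℝ → ℝ} (h : LinearGrowth C f) : 0 ≤ C := by
  have h1 := h.bound 1 one_pos
  have := abs_nonneg (f 1)
  linarith

/-- `t ↦ e^{-at} ∫₀¹ σ^κ e^{atσ} f(tσ) dσ`. -/
noncomputable def expMean (κ : ℕ) (a : ℝ) (f : ℝ → ℝ) (t : ℝ) : ℝ :=
  rexp (-a * t) * powerMean κ (fun s => rexp (a * s) * f s) t

/-- The Green operator of `-4(z∂² + (κ+1)∂) + 4a²z + 4a(κ+1)` on the half-line. -/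
noncomputable def green (κ : ℕ) (a : ℝ) (f : ℝ → ℝ) (z : ℝ) : ℝ :=
  (1 / 4) * ∫ τ in Ioi (0 : ℝ), rexp (-a * τ) * expMean κ a f (z + τ)

section Operator

variable {κ : ℕ} {a C : ℝ} {f g : ℝ → ℝ}

lemma expMean_congr (h : ∀ x, 0 < x → f x = g x) {t : ℝ} (ht : 0 < t) :
    expMean κ a f t = expMean κ a g t := by
  unfold expMean
  rw [powerMean_congr (fun x hx => by rw [h x hx]) ht]

lemma green_congr (h : ∀ x, 0 < x → f x = g x) {z : ℝ} (hz : 0 ≤ z) :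
    green κ a f z = green κ a g z := by
  unfold green
  congr 1
  refine setIntegral_congr_fun measurableSet_Ioi fun τ hτ => ?_
  rw [expMean_congr h (add_pos_of_nonneg_of_pos hz hτ)]

lemma measurable_expMean (hf : Measurable f) : Measurable (expMean κ a f) := by
  unfold expMean powerMean
  simp only [intervalIntegral.integral_of_le zero_le_one]
  refine Measurable.mul (by fun_prop) ?_
  have : StronglyMeasurable (Function.uncurry fun t σ : ℝ =>
      σ ^ κ * (rexp (a * (t * σ)) * f (t * σ))) := by
    apply Measurable.stronglyMeasurable
    unfold Function.uncurry
    fun_prop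
  exact (this.integral_prod_right' (ν := volume.restrict (Ioc 0 1))).measurable

lemma measurable_green (hf : Measurable f) : Measurable (green κ a f) := by
  unfold green
  refine Measurable.const_mul ?_ _
  have hm := measurable_expMean (κ := κ) (a := a) hf
  have : StronglyMeasurable (Function.uncurry fun z τ : ℝ =>
      rexp (-a * τ) * expMean κ a f (z + τ)) := by
    apply Measurable.stronglyMeasurable
    unfold Function.uncurry
    fun_prop
  exact (this.integral_prod_right' (ν := volume.restrict (Ioi 0))).measurable

lemma LinearGrowth.norm_integrand_le (hf : LinearGrowth C f) (ha : 0 ≤ a) {t : ℝ} (ht : 0 < t)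
    {σ : ℝ} (hσ : σ ∈ Ioc (0 : ℝ) 1) :
    ‖σ ^ κ * (rexp (a * (t * σ)) * f (t * σ))‖ ≤ rexp (a * t) * (C * (1 + t)) := by
  have h1 : t * σ ≤ t := by nlinarith [hσ.2]
  have hC := hf.nonneg
  rw [norm_mul, norm_mul, norm_pow, Real.norm_of_nonneg hσ.1.le, Real.norm_of_nonneg (exp_pos _).le]
  calc σ ^ κ * (rexp (a * (t * σ)) * ‖f (t * σ)‖)
      ≤ 1 * (rexp (a * t) * (C * (1 + t))) := by
        gcongr
        · exact pow_le_one₀ hσ.1.le hσ.2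
        · refine (hf.bound _ (mul_pos ht hσ.1)).trans ?_
          gcongr
    _ = _ := one_mul _

lemma LinearGrowth.intervalIntegrable (hf : LinearGrowth C f) (ha : 0 ≤ a) {t : ℝ} (ht : 0 < t) :
    IntervalIntegrable (fun σ => σ ^ κ * (rexp (a * (t * σ)) * f (t * σ))) volume 0 1 := by
  refine (intervalIntegrable_const (c := rexp (a * t) * (C * (1 + t)))).mono_fun' ?_ ?_
  · have := hf.measurable
    exact Measurable.aestronglyMeasurable (by fun_prop)
  · rw [uIoc_of_le zero_le_one]
    filter_upwards [ae_restrict_mem measurableSet_Ioc] with σ hσ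
    exact hf.norm_integrand_le ha ht hσ

lemma LinearGrowth.abs_expMean_le (hf : LinearGrowth C f) (ha : 0 ≤ a) {t : ℝ} (ht : 0 < t) :
    |expMean κ a f t| ≤ C * (1 + t) := by
  have h := intervalIntegral.norm_integral_le_of_norm_le_const (a := 0) (b := 1)
    (f := fun σ => σ ^ κ * (rexp (a * (t * σ)) * f (t * σ))) (C := rexp (a * t) * (C * (1 + t)))
    (fun σ hσ => by
      rw [uIoc_of_le zero_le_one] at hσ
      exact hf.norm_integrand_le ha ht hσ)
  rw [sub_zero, abs_one, mul_one] at h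
  unfold expMean powerMean
  rw [abs_mul, abs_of_pos (exp_pos _)]
  calc _ ≤ rexp (-a * t) * (rexp (a * t) * (C * (1 + t))) := by gcongr; exact h
    _ = _ := by rw [← mul_assoc, ← Real.exp_add]; simp

lemma expMean_mono (hf : LinearGrowth C f) (hg : LinearGrowth C g) (ha : 0 ≤ a)
    (h : ∀ x, 0 < x → f x ≤ g x) {t : ℝ} (ht : 0 < t) : expMean κ a f t ≤ expMean κ a g t := by
  unfold expMean powerMean
  gcongr
  refine intervalIntegral.integral_mono_on_of_le_Ioo zero_le_one (hf.intervalIntegrable ha ht)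
    (hg.intervalIntegrable ha ht) fun σ hσ => ?_
  have := h _ (mul_pos ht hσ.1)
  have := hσ.1.le
  simp only
  gcongr

lemma integrableOn_exp_mul_linear (ha : 0 < a) (z : ℝ) :
    IntegrableOn (fun τ => rexp (-a * τ) * (C * (1 + (z + τ)))) (Ioi 0) := by
  have h1 : IntegrableOn (fun τ : ℝ => rexp (-a * τ)) (Ioi 0) := by
    simpa using integrableOn_exp_mul_Ioi (neg_lt_zero.2 ha) 0
  have h2 : IntegrableOn (fun τ : ℝ => τ * rexp (-a * τ)) (Ioi 0) := by
    have := integrableOn_rpow_mul_exp_neg_mul_rpow (p := 1) (s := 1) (b := a) (by norm_num)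
      one_pos ha
    simpa using this
  have h3 := (h1.const_mul (C * (1 + z))).add (h2.const_mul C)
  refine h3.congr (Eventually.of_forall fun τ => ?_)
  simp only [Pi.add_apply]; ring

lemma LinearGrowth.norm_green_integrand_le (hf : LinearGrowth C f) (ha : 0 < a) {z τ : ℝ}
    (hz : 0 ≤ z) (hτ : 0 < τ) :
    ‖rexp (-a * τ) * expMean κ a f (z + τ)‖ ≤ rexp (-a * τ) * (C * (1 + (z + τ))) := by
  rw [norm_mul, Real.norm_of_nonneg (exp_pos _).le]
  gcongr
  exact hf.abs_expMean_le ha.le (by linarith)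

lemma LinearGrowth.integrableOn (hf : LinearGrowth C f) (ha : 0 < a) {z : ℝ} (hz : 0 ≤ z) :
    IntegrableOn (fun τ => rexp (-a * τ) * expMean κ a f (z + τ)) (Ioi 0) := by
  refine (integrableOn_exp_mul_linear (C := C) ha z).mono' ?_ ?_
  · have := measurable_expMean (κ := κ) (a := a) hf.measurable
    exact Measurable.aestronglyMeasurable (by fun_prop)
  · filter_upwards [ae_restrict_mem measurableSet_Ioi] with τ hτ
    exact hf.norm_green_integrand_le ha hz hτ

lemma green_mono (hf : LinearGrowth C f) (hg : LinearGrowth C g) (ha : 0 < a)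
    (h : ∀ x, 0 < x → f x ≤ g x) {z : ℝ} (hz : 0 ≤ z) : green κ a f z ≤ green κ a g z := by
  unfold green
  gcongr ?_ * ?_
  refine setIntegral_mono_on (hf.integrableOn ha hz) (hg.integrableOn ha hz) measurableSet_Ioi
    fun τ hτ => ?_
  have := expMean_mono (κ := κ) hf hg ha.le h (add_pos_of_nonneg_of_pos hz hτ)
  gcongr

lemma tendsto_expMean {F : ℕ → ℝ → ℝ} (hF : ∀ n, LinearGrowth C (F n)) (ha : 0 ≤ a)
    (h : ∀ x, 0 < x → Tendsto (fun n => F n x) atTop (𝓝 (f x))) {t : ℝ} (ht : 0 < t) :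
    Tendsto (fun n => expMean κ a (F n) t) atTop (𝓝 (expMean κ a f t)) := by
  unfold expMean powerMean
  refine Tendsto.const_mul _ ?_
  refine intervalIntegral.tendsto_integral_filter_of_dominated_convergence
    (fun _ => rexp (a * t) * (C * (1 + t))) ?_ ?_ intervalIntegrable_const ?_
  · refine Eventually.of_forall fun n => ?_
    have := (hF n).measurable
    exact Measurable.aestronglyMeasurable (by fun_prop)
  · refine Eventually.of_forall fun n => Eventually.of_forall fun σ hσ => ?_
    rw [uIoc_of_le zero_le_one] at hσ
    exact (hF n).norm_integrand_le ha ht hσ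
  · refine Eventually.of_forall fun σ hσ => ?_
    rw [uIoc_of_le zero_le_one] at hσ
    exact ((h _ (mul_pos ht hσ.1)).const_mul _).const_mul _

lemma tendsto_green {F : ℕ → ℝ → ℝ} (hF : ∀ n, LinearGrowth C (F n)) (ha : 0 < a)
    (h : ∀ x, 0 < x → Tendsto (fun n => F n x) atTop (𝓝 (f x))) {z : ℝ} (hz : 0 ≤ z) :
    Tendsto (fun n => green κ a (F n) z) atTop (𝓝 (green κ a f z)) := by
  unfold green
  refine Tendsto.const_mul _ ?_
  refine tendsto_integral_of_dominated_convergence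
    (fun τ => rexp (-a * τ) * (C * (1 + (z + τ)))) ?_ (integrableOn_exp_mul_linear ha z) ?_ ?_
  · intro n
    have := measurable_expMean (κ := κ) (a := a) (hF n).measurable
    exact Measurable.aestronglyMeasurable (by fun_prop)
  · intro n
    filter_upwards [ae_restrict_mem measurableSet_Ioi] with τ hτ
    exact (hF n).norm_green_integrand_le ha hz hτ
  · filter_upwards [ae_restrict_mem measurableSet_Ioi] with τ hτ
    exact (tendsto_expMean hF ha.le h (add_pos_of_nonneg_of_pos hz hτ)).const_mul _

lemma green_eq_integral_Ioi (z : ℝ) :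
    green κ a f z = rexp (a * z) / 4 * ∫ t in Ioi z, rexp (-a * t) * expMean κ a f t := by
  have h : ∫ t in Ioi z, rexp (-a * t) * expMean κ a f t =
      ∫ τ in Ioi (0 : ℝ), rexp (-a * (z + τ)) * expMean κ a f (z + τ) := by
    have := (measurePreserving_add_left volume z).setIntegral_preimage_emb
      (measurableEmbedding_addLeft z) (fun t => rexp (-a * t) * expMean κ a f t) (Ioi z)
    rw [← this]
    simp
  rw [h, green, ← integral_const_mul, ← integral_const_mul]
  refine integral_congr_ae (Eventually.of_forall fun τ => ?_)
  simp only
  have e : rexp (-a * τ) = rexp (a * z) * rexp (-a * (z + τ)) := by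
    rw [← Real.exp_add]; congr 1; ring
  rw [e]; ring

lemma LinearGrowth.integrableOn_Ioi (hf : LinearGrowth C f) (ha : 0 < a) {z : ℝ} (hz : 0 ≤ z) :
    IntegrableOn (fun t => rexp (-a * t) * expMean κ a f t) (Ioi z) := by
  have h := hf.integrableOn (κ := κ) ha le_rfl
  simp only [zero_add] at h
  exact h.mono_set (Ioi_subset_Ioi hz)

lemma sub_le_expMean (hf : LinearGrowth C f) (ha : 0 < a) {S S1 S2 : ℝ → ℝ} {K : ℝ}
    (h1 : ∀ z, 0 < z → HasDerivAt S (S1 z) z) (h2 : ∀ z, 0 < z → HasDerivAt S1 (S2 z) z)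
    (hK : ∀ z, 0 < z → |S z| ≤ K) (hK1 : ∀ z, 0 < z → |S1 z| ≤ K)
    (h : ∀ z, 0 < z → (4 * a ^ 2 * z + 4 * a * (κ + 1)) * S z
      - 4 * (z * S2 z + (κ + 1) * S1 z) ≤ f z) {t : ℝ} (ht : 0 < t) :
    4 * (a * S t - S1 t) ≤ expMean κ a f t := by
  set D : ℝ → ℝ := fun s => s ^ (κ + 1) * (rexp (a * s) * (4 * (a * S s - S1 s))) with hD
  have hderiv : ∀ s, 0 < s → HasDerivAt D (s ^ κ * (rexp (a * s) *
      ((4 * a ^ 2 * s + 4 * a * (κ + 1)) * S s - 4 * (s * S2 s + (κ + 1) * S1 s)))) s := by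
    intro s hs
    have e1 : HasDerivAt (fun s => rexp (a * s)) (rexp (a * s) * a) s :=
      (hasDerivAt_const_mul a).exp
    have e2 := (((h1 s hs).const_mul a).fun_sub (h2 s hs)).const_mul 4
    refine ((hasDerivAt_pow (κ + 1) s).fun_mul (e1.fun_mul e2)).congr_deriv ?_
    simp only [Nat.add_sub_cancel]
    push_cast
    ring
  have hcont : ContinuousOn D (Icc 0 t) := by
    intro s hs
    rcases hs.1.eq_or_lt with rfl | hs0
    · have hD0 : D 0 = 0 := by simp [hD]
      rw [ContinuousWithinAt, hD0]
      set M := t ^ κ * (rexp (a * t) * (4 * (a * K + K)))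
      have hlim : Tendsto (fun s : ℝ => s * M) (𝓝[Icc 0 t] 0) (𝓝 0) := by
        have : Tendsto (fun s : ℝ => s * M) (𝓝 0) (𝓝 (0 * M)) :=
          (continuous_id.mul continuous_const).tendsto 0
        rw [zero_mul] at this
        exact this.mono_left nhdsWithin_le_nhds
      refine squeeze_zero_norm' ?_ hlim
      filter_upwards [self_mem_nhdsWithin] with s hs
      rcases hs.1.eq_or_lt with rfl | hs0
      · simp [hD0]
      · have b1 := hK s hs0
        have b2 := hK1 s hs0
        have b3 : |a * S s - S1 s| ≤ a * K + K := by
          refine (abs_sub _ _).trans ?_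
          rw [abs_mul, abs_of_pos ha]
          gcongr
        simp only [hD]
        rw [pow_succ', norm_mul, norm_mul, norm_mul, norm_mul, Real.norm_of_nonneg hs.1,
          Real.norm_of_nonneg (pow_nonneg hs.1 κ), Real.norm_of_nonneg (exp_pos _).le,
          Real.norm_of_nonneg (by norm_num : (0 : ℝ) ≤ 4), Real.norm_eq_abs, mul_assoc]
        have := hs.1
        have := hs.2
        change _ ≤ s * (t ^ κ * (rexp (a * t) * (4 * (a * K + K))))
        gcongr
    · exact (hderiv s hs0).continuousAt.continuousWithinAt
  have hintg : IntegrableOn (fun s => s ^ κ * (rexp (a * s) * f s)) (Icc 0 t) := by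
    rw [integrableOn_Icc_iff_integrableOn_Ioc]
    have := hf.measurable
    refine Measure.integrableOn_of_bounded (M := t ^ κ * (rexp (a * t) * (C * (1 + t)))) (by simp)
      (Measurable.aestronglyMeasurable (by fun_prop)) ?_
    filter_upwards [ae_restrict_mem measurableSet_Ioc] with s hs
    have hC := hf.nonneg
    have hs1 := hs.1.le
    have hs2 := hs.2
    rw [norm_mul, norm_mul, norm_pow, Real.norm_of_nonneg hs1, Real.norm_of_nonneg (exp_pos _).le]
    gcongr
    refine (hf.bound _ hs.1).trans ?_
    gcongr
  have key := intervalIntegral.sub_le_integral_of_hasDeriv_right_of_le ht.le hcont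
    (fun s hs => (hderiv s hs.1).hasDerivWithinAt) hintg (fun s hs => by
      have := hs.1.le
      have := h s hs.1
      gcongr)
  rw [← powerMean_eq_integral κ (fun s => rexp (a * s) * f s) t] at key
  have hD0 : D 0 = 0 := by simp [hD]
  rw [hD0, sub_zero] at key
  have key2 := le_of_mul_le_mul_left key (pow_pos ht _)
  unfold expMean
  calc 4 * (a * S t - S1 t) = rexp (-a * t) * (rexp (a * t) * (4 * (a * S t - S1 t))) := by
        rw [← mul_assoc, ← Real.exp_add]; simp
    _ ≤ _ := by gcongr

lemma le_green (hf : LinearGrowth C f) (ha : 0 < a) {S S1 S2 : ℝ → ℝ} {K : ℝ}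
    (h1 : ∀ z, 0 < z → HasDerivAt S (S1 z) z) (h2 : ∀ z, 0 < z → HasDerivAt S1 (S2 z) z)
    (hK : ∀ z, 0 < z → |S z| ≤ K) (hK1 : ∀ z, 0 < z → |S1 z| ≤ K)
    (h : ∀ z, 0 < z → (4 * a ^ 2 * z + 4 * a * (κ + 1)) * S z
      - 4 * (z * S2 z + (κ + 1) * S1 z) ≤ f z) {z : ℝ} (hz : 0 < z) :
    S z ≤ green κ a f z := by
  have hintg := hf.integrableOn_Ioi (κ := κ) ha hz.le
  have hderiv : ∀ t, 0 < t → HasDerivAt (fun t => -(rexp (-a * t) * S t))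
      (rexp (-a * t) * (a * S t - S1 t)) t := by
    intro t ht
    have e1 : HasDerivAt (fun s => rexp (-a * s)) (rexp (-a * t) * -a) t :=
      (hasDerivAt_const_mul (-a)).exp
    refine (e1.fun_mul (h1 t ht)).fun_neg.congr_deriv ?_
    ring
  have step : ∀ T, z ≤ T → rexp (-a * z) * S z - rexp (-a * T) * S T ≤
      ∫ t in z..T, (1 / 4) * (rexp (-a * t) * expMean κ a f t) := by
    intro T hT
    have := intervalIntegral.sub_le_integral_of_hasDeriv_right_of_le hT
      (fun t ht => (hderiv t (hz.trans_le ht.1)).continuousAt.continuousWithinAt)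
      (fun t ht => (hderiv t (hz.trans ht.1)).hasDerivWithinAt)
      (φ := fun t => (1 / 4) * (rexp (-a * t) * expMean κ a f t)) ?_ ?_
    · linarith
    · rw [integrableOn_Icc_iff_integrableOn_Ioc]
      exact (hintg.mono_set Ioc_subset_Ioi_self).const_mul _
    · intro t ht
      have := sub_le_expMean (κ := κ) hf ha h1 h2 hK hK1 h (hz.trans ht.1)
      have h3 : a * S t - S1 t ≤ 1 / 4 * expMean κ a f t := by linarith
      calc _ ≤ rexp (-a * t) * (1 / 4 * expMean κ a f t) := by gcongr
        _ = _ := by ring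
  have hlim1 : Tendsto (fun T => rexp (-a * T) * S T) atTop (𝓝 0) := by
    have : Tendsto (fun T => rexp (-a * T) * K) atTop (𝓝 (0 * K)) := by
      refine Tendsto.mul_const K ?_
      exact Real.tendsto_exp_atBot.comp (tendsto_id.const_mul_atTop_of_neg (neg_lt_zero.2 ha))
    rw [zero_mul] at this
    refine squeeze_zero_norm' ?_ this
    filter_upwards [eventually_gt_atTop 0] with T hT
    rw [norm_mul, Real.norm_of_nonneg (exp_pos _).le]
    gcongr
    exact hK T hT
  have hlim2 := intervalIntegral_tendsto_integral_Ioi z (hintg.const_mul (1 / 4)) tendsto_id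
  have := le_of_tendsto_of_tendsto (hlim1.const_sub (rexp (-a * z) * S z)) hlim2
    (by filter_upwards [eventually_ge_atTop z] with T hT using step T hT)
  rw [sub_zero, integral_const_mul] at this
  rw [green_eq_integral_Ioi]
  calc S z = rexp (a * z) * (rexp (-a * z) * S z) := by
        rw [← mul_assoc, ← Real.exp_add]; simp
    _ ≤ rexp (a * z) * (1 / 4 * ∫ t in Ioi z, rexp (-a * t) * expMean κ a f t) := by gcongr
    _ = _ := by ring

lemma expMean_neg (t : ℝ) : expMean κ a (fun x => -f x) t = -expMean κ a f t := by
  simp [expMean, powerMean]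

lemma green_neg (z : ℝ) : green κ a (fun x => -f x) z = -green κ a f z := by
  simp only [green, expMean_neg, mul_neg, integral_neg]

lemma green_le (hf : LinearGrowth C f) (ha : 0 < a) {S S1 S2 : ℝ → ℝ} {K : ℝ}
    (h1 : ∀ z, 0 < z → HasDerivAt S (S1 z) z) (h2 : ∀ z, 0 < z → HasDerivAt S1 (S2 z) z)
    (hK : ∀ z, 0 < z → |S z| ≤ K) (hK1 : ∀ z, 0 < z → |S1 z| ≤ K)
    (h : ∀ z, 0 < z → f z ≤ (4 * a ^ 2 * z + 4 * a * (κ + 1)) * S z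
      - 4 * (z * S2 z + (κ + 1) * S1 z)) {z : ℝ} (hz : 0 < z) :
    green κ a f z ≤ S z := by
  have := le_green (κ := κ) (f := fun x => -f x) (C := C) (S := fun x => -S x)
    (S1 := fun x => -S1 x) (S2 := fun x => -S2 x) (K := K)
    ⟨hf.measurable.neg, fun x hx => by rw [abs_neg]; exact hf.bound x hx⟩ ha
    (fun z hz => (h1 z hz).fun_neg) (fun z hz => (h2 z hz).fun_neg)
    (fun z hz => by rw [abs_neg]; exact hK z hz) (fun z hz => by rw [abs_neg]; exact hK1 z hz)
    (fun z hz => by linarith [h z hz]) hz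
  rw [green_neg] at this
  linarith

/-- `f` agrees on `[0, ∞)` with a `Cⁿ` function on the line. -/
def HasExtension (n : ℕ) (f : ℝ → ℝ) : Prop :=
  ∃ g : ℝ → ℝ, ContDiff ℝ n g ∧ ∀ z, 0 ≤ z → g z = f z

lemma LinearGrowth.hasExtension_zero (hf : LinearGrowth C f) (ha : 0 < a) :
    HasExtension 0 (green κ a f) := by
  refine ⟨fun z => green κ a f (max z 0), ?_, fun z hz => by simp only [max_eq_left hz]⟩
  rw [Nat.cast_zero, contDiff_zero]
  have h : ContinuousOn (green κ a f) (Ici 0) := by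
    rw [funext fun z => green_eq_integral_Ioi (κ := κ) (a := a) (f := f) z]
    exact ContinuousOn.mul (by fun_prop)
      (hf.integrableOn_Ioi ha le_rfl).continuousOn_Ici_primitive_Ioi
  exact h.comp_continuous (by fun_prop) fun z => le_max_right z 0

lemma green_eq_of_eq (hf : LinearGrowth C f) (ha : 0 < a)
    (hfg : ∀ z, 0 ≤ z → g z = f z) {z : ℝ} (hz : 0 ≤ z) :
    green κ a f z = rexp (a * z) / 4 * ((∫ t in Ioi (0 : ℝ), rexp (-a * t) * expMean κ a f t)
      - ∫ t in (0 : ℝ)..z, rexp (-a * t) * expMean κ a g t) := by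
  have hintg := hf.integrableOn_Ioi (κ := κ) ha le_rfl
  have hint2 := hf.integrableOn_Ioi (κ := κ) ha hz
  have h1 : ∫ t in (0 : ℝ)..z, rexp (-a * t) * expMean κ a g t =
      ∫ t in (0 : ℝ)..z, rexp (-a * t) * expMean κ a f t := by
    refine intervalIntegral.integral_congr_ae (Eventually.of_forall fun t ht => ?_)
    rw [uIoc_of_le hz] at ht
    rw [expMean_congr (fun x hx => hfg x hx.le) ht.1]
  rw [h1, green_eq_integral_Ioi, ← intervalIntegral.integral_Ioi_sub_Ioi hintg hz]
  congr 1
  ring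

lemma continuous_expMean (hg : Continuous g) : Continuous (expMean κ a g) := by
  unfold expMean
  exact Continuous.mul (by fun_prop) (continuous_powerMean κ (by fun_prop))

lemma hasDerivAt_green_formula (hg : Continuous g) (c z : ℝ) :
    HasDerivAt (fun z => rexp (a * z) / 4 * (c - ∫ t in (0 : ℝ)..z,
        rexp (-a * t) * expMean κ a g t))
      (a * (rexp (a * z) / 4 * (c - ∫ t in (0 : ℝ)..z, rexp (-a * t) * expMean κ a g t))
        - expMean κ a g z / 4) z := by
  have hc : Continuous fun t => rexp (-a * t) * expMean κ a g t :=
    Continuous.mul (by fun_prop) (continuous_expMean hg)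
  have h1 : HasDerivAt (fun z => ∫ t in (0 : ℝ)..z, rexp (-a * t) * expMean κ a g t)
      (rexp (-a * z) * expMean κ a g z) z :=
    intervalIntegral.integral_hasDerivAt_right (hc.intervalIntegrable _ _)
      (hc.stronglyMeasurableAtFilter _ _) hc.continuousAt
  have h2 : HasDerivAt (fun s => rexp (a * s) / 4) (rexp (a * z) * a / 4) z :=
    (hasDerivAt_const_mul a).exp.div_const 4
  refine (h2.fun_mul (h1.const_sub c)).congr_deriv ?_
  have e : rexp (a * z) * rexp (-a * z) = 1 := by rw [← Real.exp_add]; simp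
  linear_combination (-expMean κ a g z / 4) * e

lemma contDiff_expMean {n : ℕ} (hg : ContDiff ℝ n g) : ContDiff ℝ n (expMean κ a g) := by
  unfold expMean
  exact ContDiff.mul (by fun_prop) (contDiff_powerMean n κ (by fun_prop))

lemma contDiff_green_formula (c : ℝ) : ∀ n : ℕ, ContDiff ℝ n g →
    ContDiff ℝ (n + 1 : ℕ) (fun z => rexp (a * z) / 4 * (c - ∫ t in (0 : ℝ)..z,
      rexp (-a * t) * expMean κ a g t)) := by
  intro n hg
  have hd := fun z => hasDerivAt_green_formula (κ := κ) (a := a) hg.continuous c z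
  have hI := contDiff_expMean (κ := κ) (a := a) hg
  set G := fun z => rexp (a * z) / 4 * (c - ∫ t in (0 : ℝ)..z, rexp (-a * t) * expMean κ a g t)
  have hstep : ∀ m : ℕ, m ≤ n → ContDiff ℝ m G → ContDiff ℝ ((m : WithTop ℕ∞) + 1) G := by
    intro m hm hG
    refine contDiff_succ_iff_deriv.2 ⟨fun x => (hd x).differentiableAt, by simp, ?_⟩
    rw [funext fun x => (hd x).deriv]
    have := hI.of_le (m := m) (by exact_mod_cast hm)
    exact (contDiff_const.mul hG).sub (this.div_const 4)
  have hall : ∀ m : ℕ, m ≤ n + 1 → ContDiff ℝ m G := by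
    intro m
    induction m with
    | zero => exact fun _ => contDiff_zero.2 (continuous_iff_continuousAt.2
        fun x => (hd x).continuousAt)
    | succ m ih => exact fun hm => by exact_mod_cast hstep m (by lia) (ih (by lia))
  exact hall (n + 1) le_rfl

lemma LinearGrowth.hasExtension_succ (hf : LinearGrowth C f) (ha : 0 < a) {n : ℕ}
    (h : HasExtension n f) : HasExtension (n + 1) (green κ a f) := by
  obtain ⟨g, hg, hfg⟩ := h
  exact ⟨_, contDiff_green_formula _ n hg,
    fun z hz => (green_eq_of_eq hf ha hfg hz).symm⟩

lemma LinearGrowth.exists_ode (hf : LinearGrowth C f) (ha : 0 < a) (h : HasExtension 1 f) :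
    ∃ G : ℝ → ℝ, ContDiff ℝ 2 G ∧ (∀ z, 0 ≤ z → G z = green κ a f z) ∧
      ∀ z, 0 ≤ z → 4 * (z * deriv (deriv G) z + (κ + 1) * deriv G z) =
        (4 * a ^ 2 * z + 4 * a * (κ + 1)) * green κ a f z - f z := by
  obtain ⟨g, hg, hfg⟩ := h
  set c := ∫ t in Ioi (0 : ℝ), rexp (-a * t) * expMean κ a f t
  set G := fun z => rexp (a * z) / 4 * (c - ∫ t in (0 : ℝ)..z, rexp (-a * t) * expMean κ a g t)
    with hGdef
  have hGC : ContDiff ℝ 2 G := by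
    exact_mod_cast contDiff_green_formula (κ := κ) (a := a) c 1 hg
  have hGf : ∀ z, 0 ≤ z → G z = green κ a f z :=
    fun z hz => (green_eq_of_eq hf ha hfg hz).symm
  have hG1 : ∀ z, HasDerivAt G (a * G z - expMean κ a g z / 4) z :=
    fun z => hasDerivAt_green_formula hg.continuous c z
  have hdG : deriv G = fun z => a * G z - expMean κ a g z / 4 := funext fun z => (hG1 z).deriv
  have hg1 := contDiff_one_iff_deriv.1 (by exact_mod_cast hg)
  set E : ℝ → ℝ := fun s => rexp (a * s) * g s with hE
  set E' : ℝ → ℝ := fun s => rexp (a * s) * a * g s + rexp (a * s) * deriv g s with hE'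
  have hEd : ∀ s, HasDerivAt E (E' s) s := fun s =>
    (hasDerivAt_const_mul a).exp.fun_mul (hg1.1 s).hasDerivAt
  have hE'c : Continuous E' := by
    have := hg1.2
    have := hg.continuous
    fun_prop
  have hI : ∀ z, HasDerivAt (expMean κ a g)
      (rexp (-a * z) * -a * powerMean κ E z + rexp (-a * z) * powerMean (κ + 1) E' z) z :=
    fun z => (hasDerivAt_const_mul (-a)).exp.fun_mul (hasDerivAt_powerMean κ hEd hE'c z)
  have hpos : ∀ z, 0 < z → 4 * (z * deriv (deriv G) z + (κ + 1) * deriv G z) =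
        (4 * a ^ 2 * z + 4 * a * (κ + 1)) * G z - g z := by
    intro z hz
    have h2 := ((hG1 z).const_mul a).fun_sub ((hI z).div_const 4)
    rw [hdG, h2.deriv]
    have e1 := powerMean_euler κ hEd hE'c hz
    have e2 : rexp (-a * z) * rexp (a * z) = 1 := by rw [← Real.exp_add]; simp
    simp only [expMean]
    change _ = _ - g z
    simp only [← hE]
    have e3 : E z = rexp (a * z) * g z := rfl
    rw [e3] at e1
    linear_combination (-rexp (-a * z)) * e1 - g z * e2
  have hGd2 : ContDiff ℝ 1 (deriv G) := by
    have : ContDiff ℝ (1 + 1) G := by norm_num; exact hGC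
    exact (contDiff_succ_iff_deriv.1 this).2.2
  have hc1 := (contDiff_one_iff_deriv.1 hGd2).2
  have hc2 := hGd2.continuous
  have hc3 := hGC.continuous
  have hc4 := hg.continuous
  have hcl : ∀ z ∈ closure (Ioi (0 : ℝ)), 4 * (z * deriv (deriv G) z + (κ + 1) * deriv G z) =
        (4 * a ^ 2 * z + 4 * a * (κ + 1)) * G z - g z := by
    intro z hz
    have : IsClosed {z | 4 * (z * deriv (deriv G) z + (κ + 1) * deriv G z) =
        (4 * a ^ 2 * z + 4 * a * (κ + 1)) * G z - g z} :=
      isClosed_eq (by fun_prop) (by fun_prop)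
    exact closure_minimal (fun z hz => hpos z hz) this hz
  refine ⟨G, hGC, hGf, fun z hz => ?_⟩
  rw [← hGf z hz, ← hfg z hz]
  exact hcl z (by rw [closure_Ioi]; exact hz)

end Operator

theorem exists_green_fixed_point {κ : ℕ} {a C : ℝ} (ha : 0 < a) {F H : ℝ → ℝ → ℝ → ℝ}
    (hF : Continuous fun p : ℝ × ℝ × ℝ => F p.1 p.2.1 p.2.2)
    (hH : Continuous fun p : ℝ × ℝ × ℝ => H p.1 p.2.1 p.2.2)
    {Al Au ql qu : ℝ → ℝ} (mAl : Measurable Al) (mAu : Measurable Au) (mql : Measurable ql)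
    (mqu : Measurable qu) (hA : ∀ z, 0 < z → Al z ≤ Au z) (hq : ∀ z, 0 < z → ql z ≤ qu z)
    (bF : ∀ z A q, 0 < z → A ∈ Icc (Al z) (Au z) → q ∈ Icc (ql z) (qu z) →
      |F z A q| ≤ C * (1 + z))
    (bH : ∀ z A q, 0 < z → A ∈ Icc (Al z) (Au z) → q ∈ Icc (ql z) (qu z) →
      |H z A q| ≤ C * (1 + z))
    (monoF : ∀ z A A' q q', 0 < z → A ∈ Icc (Al z) (Au z) → A' ∈ Icc (Al z) (Au z) →
      q ∈ Icc (ql z) (qu z) → q' ∈ Icc (ql z) (qu z) → A ≤ A' → q ≤ q' → F z A q ≤ F z A' q')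
    (monoH : ∀ z A A' q q', 0 < z → A ∈ Icc (Al z) (Au z) → A' ∈ Icc (Al z) (Au z) →
      q ∈ Icc (ql z) (qu z) → q' ∈ Icc (ql z) (qu z) → A ≤ A' → q ≤ q' → H z A q ≤ H z A' q')
    (subA : ∀ z, 0 < z → Al z ≤ green κ a (fun z => F z (Al z) (ql z)) z)
    (subq : ∀ z, 0 < z → ql z ≤ green 0 a (fun z => H z (Al z) (ql z)) z)
    (supA : ∀ z, 0 < z → green κ a (fun z => F z (Au z) (qu z)) z ≤ Au z)
    (supq : ∀ z, 0 < z → green 0 a (fun z => H z (Au z) (qu z)) z ≤ qu z) :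
    ∃ A q : ℝ → ℝ, LinearGrowth C (fun z => F z (A z) (q z)) ∧
      LinearGrowth C (fun z => H z (A z) (q z)) ∧
      (∀ z, 0 ≤ z → A z = green κ a (fun z => F z (A z) (q z)) z) ∧
      (∀ z, 0 ≤ z → q z = green 0 a (fun z => H z (A z) (q z)) z) ∧
      ∀ z, 0 < z → A z ∈ Icc (Al z) (Au z) ∧ q z ∈ Icc (ql z) (qu z) := by
  set Good : (ℝ → ℝ) × (ℝ → ℝ) → Prop := fun p => Measurable p.1 ∧ Measurable p.2 ∧
    ∀ z, 0 < z → p.1 z ∈ Icc (Al z) (Au z) ∧ p.2 z ∈ Icc (ql z) (qu z) with hGood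
  set T : (ℝ → ℝ) × (ℝ → ℝ) → (ℝ → ℝ) × (ℝ → ℝ) := fun p =>
    (green κ a (fun z => F z (p.1 z) (p.2 z)), green 0 a (fun z => H z (p.1 z) (p.2 z))) with hT
  have lgF : ∀ p, Good p → LinearGrowth C (fun z => F z (p.1 z) (p.2 z)) := fun p hp =>
    ⟨hF.measurable.comp (measurable_id.prodMk (hp.1.prodMk hp.2.1)),
      fun z hz => bF z _ _ hz (hp.2.2 z hz).1 (hp.2.2 z hz).2⟩
  have lgH : ∀ p, Good p → LinearGrowth C (fun z => H z (p.1 z) (p.2 z)) := fun p hp =>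
    ⟨hH.measurable.comp (measurable_id.prodMk (hp.1.prodMk hp.2.1)),
      fun z hz => bH z _ _ hz (hp.2.2 z hz).1 (hp.2.2 z hz).2⟩
  have gl : Good (Al, ql) := ⟨mAl, mql, fun z hz =>
    ⟨⟨le_rfl, hA z hz⟩, ⟨le_rfl, hq z hz⟩⟩⟩
  have gu : Good (Au, qu) := ⟨mAu, mqu, fun z hz =>
    ⟨⟨hA z hz, le_rfl⟩, ⟨hq z hz, le_rfl⟩⟩⟩
  have monoT : ∀ p p', Good p → Good p' → (∀ z, 0 < z → p.1 z ≤ p'.1 z ∧ p.2 z ≤ p'.2 z) →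
      ∀ z, 0 < z → (T p).1 z ≤ (T p').1 z ∧ (T p).2 z ≤ (T p').2 z := by
    intro p p' hp hp' h z hz
    exact ⟨green_mono (lgF p hp) (lgF p' hp') ha (fun x hx => monoF x _ _ _ _ hx (hp.2.2 x hx).1
        (hp'.2.2 x hx).1 (hp.2.2 x hx).2 (hp'.2.2 x hx).2 (h x hx).1 (h x hx).2) hz.le,
      green_mono (lgH p hp) (lgH p' hp') ha (fun x hx => monoH x _ _ _ _ hx (hp.2.2 x hx).1
        (hp'.2.2 x hx).1 (hp.2.2 x hx).2 (hp'.2.2 x hx).2 (h x hx).1 (h x hx).2) hz.le⟩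
  have goodT : ∀ p, Good p → Good (T p) := by
    intro p hp
    refine ⟨measurable_green (lgF p hp).measurable, measurable_green (lgH p hp).measurable,
      fun z hz => ?_⟩
    have h1 := monoT _ _ gl hp (fun z hz => ⟨(hp.2.2 z hz).1.1, (hp.2.2 z hz).2.1⟩) z hz
    have h2 := monoT _ _ hp gu (fun z hz => ⟨(hp.2.2 z hz).1.2, (hp.2.2 z hz).2.2⟩) z hz
    exact ⟨⟨(subA z hz).trans h1.1, h2.1.trans (supA z hz)⟩,
      ⟨(subq z hz).trans h1.2, h2.2.trans (supq z hz)⟩⟩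
  set P : ℕ → (ℝ → ℝ) × (ℝ → ℝ) := fun n => T^[n] (Al, ql) with hP
  have hPs : ∀ n, P (n + 1) = T (P n) := fun n => Function.iterate_succ_apply' T n _
  have goodP : ∀ n, Good (P n) := by
    intro n
    induction n with
    | zero => exact gl
    | succ n ih => rw [hPs]; exact goodT _ ih
  have monoP : ∀ n z, 0 < z → (P n).1 z ≤ (P (n + 1)).1 z ∧ (P n).2 z ≤ (P (n + 1)).2 z := by
    intro n
    induction n with
    | zero => exact fun z hz => ⟨((goodP 1).2.2 z hz).1.1, ((goodP 1).2.2 z hz).2.1⟩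
    | succ n ih =>
      intro z hz
      have h := monoT _ _ (goodP n) (goodP (n + 1)) ih z hz
      rwa [← hPs, ← hPs] at h
  set A₀ : ℝ → ℝ := (Ioi 0).indicator fun z => ⨆ n, (P n).1 z with hA₀
  set q₀ : ℝ → ℝ := (Ioi 0).indicator fun z => ⨆ n, (P n).2 z with hq₀
  have limA : ∀ z, 0 < z → Tendsto (fun n => (P n).1 z) atTop (𝓝 (A₀ z)) := by
    intro z hz
    rw [hA₀, indicator_of_mem (mem_Ioi.2 hz)]
    exact tendsto_atTop_ciSup (monotone_nat_of_le_succ fun n => (monoP n z hz).1)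
      ⟨Au z, by rintro _ ⟨n, rfl⟩; exact ((goodP n).2.2 z hz).1.2⟩
  have limq : ∀ z, 0 < z → Tendsto (fun n => (P n).2 z) atTop (𝓝 (q₀ z)) := by
    intro z hz
    rw [hq₀, indicator_of_mem (mem_Ioi.2 hz)]
    exact tendsto_atTop_ciSup (monotone_nat_of_le_succ fun n => (monoP n z hz).2)
      ⟨qu z, by rintro _ ⟨n, rfl⟩; exact ((goodP n).2.2 z hz).2.2⟩
  have mA₀ : Measurable A₀ := by
    refine measurable_of_tendsto_metrizable
      (f := fun n => (Ioi (0 : ℝ)).indicator (P n).1)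
      (fun n => (goodP n).1.indicator measurableSet_Ioi) (tendsto_pi_nhds.2 fun z => ?_)
    by_cases hz : 0 < z
    · simpa only [indicator_of_mem (mem_Ioi.2 hz)] using limA z hz
    · simp [hA₀, indicator_of_notMem (s := Ioi (0 : ℝ)) (a := z) (by simpa using hz)]
  have mq₀ : Measurable q₀ := by
    refine measurable_of_tendsto_metrizable
      (f := fun n => (Ioi (0 : ℝ)).indicator (P n).2)
      (fun n => (goodP n).2.1.indicator measurableSet_Ioi) (tendsto_pi_nhds.2 fun z => ?_)
    by_cases hz : 0 < z
    · simpa only [indicator_of_mem (mem_Ioi.2 hz)] using limq z hz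
    · simp [hq₀, indicator_of_notMem (s := Ioi (0 : ℝ)) (a := z) (by simpa using hz)]
  have good₀ : Good (A₀, q₀) := ⟨mA₀, mq₀, fun z hz =>
    ⟨isClosed_Icc.mem_of_tendsto (limA z hz) (Eventually.of_forall fun n =>
        ((goodP n).2.2 z hz).1),
      isClosed_Icc.mem_of_tendsto (limq z hz) (Eventually.of_forall fun n =>
        ((goodP n).2.2 z hz).2)⟩⟩
  have fixed : ∀ z, 0 < z → (T (A₀, q₀)).1 z = A₀ z ∧ (T (A₀, q₀)).2 z = q₀ z := by
    intro z hz
    have lim : ∀ x, 0 < x → Tendsto (fun n => (x, (P n).1 x, (P n).2 x)) atTop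
        (𝓝 (x, A₀ x, q₀ x)) := fun x hx =>
      tendsto_const_nhds.prodMk_nhds ((limA x hx).prodMk_nhds (limq x hx))
    have h1 := tendsto_green (κ := κ) (fun n => lgF _ (goodP n)) ha
      (fun x hx => (hF.tendsto (x, A₀ x, q₀ x)).comp (lim x hx)) hz.le
    have h2 := tendsto_green (κ := 0) (fun n => lgH _ (goodP n)) ha
      (fun x hx => (hH.tendsto (x, A₀ x, q₀ x)).comp (lim x hx)) hz.le
    refine ⟨tendsto_nhds_unique h1 ?_, tendsto_nhds_unique h2 ?_⟩
    · have := (tendsto_add_atTop_iff_nat 1).2 (limA z hz)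
      simpa only [hPs] using this
    · have := (tendsto_add_atTop_iff_nat 1).2 (limq z hz)
      simpa only [hPs] using this
  have goodL := goodT _ good₀
  refine ⟨(T (A₀, q₀)).1, (T (A₀, q₀)).2, lgF _ goodL, lgH _ goodL, fun z hz => ?_, fun z hz => ?_,
    goodL.2.2⟩
  · exact green_congr (fun x hx => by rw [(fixed x hx).1, (fixed x hx).2]) hz
  · exact green_congr (fun x hx => by rw [(fixed x hx).1, (fixed x hx).2]) hz

/-- Nonlinearity of the equation for the amplitude `A`. -/
noncomputable def amplitudeTerm (κ : ℕ) (μ η z A q : ℝ) : ℝ :=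
  μ * A * (z ^ κ * A ^ 2 - 1 + η ^ 2 / 3 * ((1 - q) * (3 - q)))

/-- Nonlinearity of the equation for the normalised biaxiality `q`. -/
noncomputable def biaxialTerm (κ : ℕ) (μ η z A q : ℝ) : ℝ :=
  μ * ((1 - η + η * q) * (3 - η + η * q) * q / 3 - z ^ κ * A ^ 2 * (2 - q))

/-- Monotone source term for the amplitude. -/
noncomputable def amplitudeSource (κ : ℕ) (μ η z A q : ℝ) : ℝ :=
  (4 * (2 * μ) ^ 2 * z + 4 * (2 * μ) * (κ + 1)) * A - amplitudeTerm κ μ η z A q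

/-- Monotone source term for the normalised biaxiality. -/
noncomputable def biaxialSource (κ : ℕ) (μ η z A q : ℝ) : ℝ :=
  (4 * (2 * μ) ^ 2 * z + 4 * (2 * μ)) * q - biaxialTerm κ μ η z A q

/-- The upper barrier for the amplitude. -/
noncomputable def upperAmplitude (κ : ℕ) (α z : ℝ) : ℝ := (z + α) ^ (-(κ / 2 : ℝ))

/-- The lower barrier for the normalised biaxiality. -/
noncomputable def lowerBiaxial (κ : ℕ) (β z : ℝ) : ℝ := (z / (z + β)) ^ κ

/-- The lower barrier for the amplitude. -/
noncomputable def lowerAmplitude (κ : ℕ) (β z : ℝ) : ℝ :=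
  upperAmplitude κ β z * √((4 - lowerBiaxial κ β z) / 3)

section Barriers

variable {κ : ℕ} {μ η α β z : ℝ}

lemma upperAmplitude_pos (hα : 0 < α) (hz : 0 < z) : 0 < upperAmplitude κ α z :=
  rpow_pos_of_pos (add_pos hz hα) _

lemma upperAmplitude_sq (hα : 0 < α) (hz : 0 < z) :
    upperAmplitude κ α z ^ 2 = ((z + α) ^ κ)⁻¹ := by
  have hy := add_pos hz hα
  unfold upperAmplitude
  rw [← rpow_natCast, ← rpow_mul hy.le, ← rpow_natCast, ← rpow_neg hy.le]
  congr 1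
  push_cast
  ring

lemma pow_mul_upperAmplitude_sq (hα : 0 < α) (hz : 0 < z) :
    z ^ κ * upperAmplitude κ α z ^ 2 = (z / (z + α)) ^ κ := by
  rw [upperAmplitude_sq hα hz, div_pow, div_eq_mul_inv]

lemma upperAmplitude_le (hα : 0 < α) (hz : 0 < z) :
    upperAmplitude κ α z ≤ α ^ (-(κ / 2 : ℝ)) :=
  rpow_le_rpow_of_nonpos hα (by linarith) (by simp; positivity)

lemma lowerBiaxial_pos (hβ : 0 < β) (hz : 0 < z) : 0 < lowerBiaxial κ β z := by
  unfold lowerBiaxial; positivity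

lemma lowerBiaxial_le (hκ : 1 ≤ κ) (hβ : 0 < β) (hz : 0 < z) :
    lowerBiaxial κ β z ≤ z / (z + β) := by
  refine pow_le_of_le_one (by positivity) ?_ (by lia)
  rw [div_le_one (by positivity)]; linarith

lemma lowerBiaxial_lt_one (hκ : 1 ≤ κ) (hβ : 0 < β) (hz : 0 < z) : lowerBiaxial κ β z < 1 := by
  refine (lowerBiaxial_le hκ hβ hz).trans_lt ?_
  rw [div_lt_one (by positivity)]; linarith

lemma one_sub_div_pow_le (hα : 0 < α) (hz : 0 < z) :
    1 - (z / (z + α)) ^ κ ≤ κ * α / (z + α) := by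
  have h := one_add_mul_le_pow (a := -(α / (z + α))) ?_ κ
  · have e : 1 + -(α / (z + α)) = z / (z + α) := by field_simp; ring
    rw [e] at h
    have e2 : κ * α / (z + α) = -(κ * -(α / (z + α))) := by ring
    rw [e2]; linarith
  · have : α / (z + α) ≤ 1 := by rw [div_le_one (by positivity)]; linarith
    linarith

lemma hasDerivAt_upperAmplitude (hα : 0 < α) (hz : 0 < z) :
    HasDerivAt (upperAmplitude κ α) (-(κ / 2) * upperAmplitude κ α z / (z + α)) z := by
  have hy := add_pos hz hα
  refine (((hasDerivAt_id z).add_const α).rpow_const (p := -(κ / 2 : ℝ))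
    (Or.inl hy.ne')).congr_deriv ?_
  rw [id, rpow_sub_one hy.ne']
  unfold upperAmplitude
  ring

lemma hasDerivAt_upperAmplitude_deriv (hα : 0 < α) (hz : 0 < z) :
    HasDerivAt (fun z => -(κ / 2) * upperAmplitude κ α z / (z + α))
      ((κ / 2) * (κ / 2 + 1) * upperAmplitude κ α z / (z + α) ^ 2) z := by
  have hy := add_pos hz hα
  refine (((hasDerivAt_upperAmplitude hα hz).const_mul (-(κ / 2 : ℝ))).fun_div
    ((hasDerivAt_id z).add_const α) hy.ne').congr_deriv ?_
  simp only [id]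
  field_simp
  ring

lemma hasDerivAt_lowerBiaxial (hβ : 0 < β) (hz : 0 < z) :
    HasDerivAt (lowerBiaxial κ β) (κ * β * lowerBiaxial κ β z / (z * (z + β))) z := by
  have hy := add_pos hz hβ
  refine ((((hasDerivAt_id z).fun_div ((hasDerivAt_id z).add_const β) hy.ne').fun_pow
    κ)).congr_deriv ?_
  unfold lowerBiaxial
  rcases κ with _ | n
  · simp
  · simp only [id, Nat.add_sub_cancel, pow_succ]
    field_simp
    ring

lemma hasDerivAt_lowerBiaxial_deriv (hβ : 0 < β) (hz : 0 < z) :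
    HasDerivAt (fun z => κ * β * lowerBiaxial κ β z / (z * (z + β)))
      (κ * β * lowerBiaxial κ β z * (κ * β - 2 * z - β) / (z * (z + β)) ^ 2) z := by
  have hy := add_pos hz hβ
  refine (((hasDerivAt_lowerBiaxial hβ hz).const_mul (κ * β)).fun_div
    ((hasDerivAt_id z).fun_mul ((hasDerivAt_id z).add_const β)) (by simp only [id]; positivity)
    ).congr_deriv ?_
  simp only [id]
  field_simp
  ring

/-- The logarithmic derivative of the lower barrier for the amplitude. -/
noncomputable def lowerLogDeriv (κ : ℕ) (β z : ℝ) : ℝ :=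
  -(κ / (2 * (z + β))) -
    κ * β * lowerBiaxial κ β z / (2 * (4 - lowerBiaxial κ β z) * (z * (z + β)))

lemma lowerAmplitude_pos (hκ : 1 ≤ κ) (hβ : 0 < β) (hz : 0 < z) : 0 < lowerAmplitude κ β z := by
  have := lowerBiaxial_lt_one hκ hβ hz
  exact mul_pos (upperAmplitude_pos hβ hz) (sqrt_pos.2 (by linarith))

lemma pow_mul_lowerAmplitude_sq (hκ : 1 ≤ κ) (hβ : 0 < β) (hz : 0 < z) :
    z ^ κ * lowerAmplitude κ β z ^ 2 = lowerBiaxial κ β z * (4 - lowerBiaxial κ β z) / 3 := by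
  have := lowerBiaxial_lt_one hκ hβ hz
  unfold lowerAmplitude
  rw [mul_pow, sq_sqrt (by linarith), ← mul_assoc, pow_mul_upperAmplitude_sq hβ hz]
  unfold lowerBiaxial
  ring

lemma hasDerivAt_lowerAmplitude (hκ : 1 ≤ κ) (hβ : 0 < β) (hz : 0 < z) :
    HasDerivAt (lowerAmplitude κ β) (lowerAmplitude κ β z * lowerLogDeriv κ β z) z := by
  have hq := lowerBiaxial_lt_one hκ hβ hz
  have hy := add_pos hz hβ
  have hg : 0 < (4 - lowerBiaxial κ β z) / 3 := by linarith
  refine ((hasDerivAt_upperAmplitude hβ hz).fun_mul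
    ((((hasDerivAt_lowerBiaxial hβ hz).const_sub 4).div_const 3).sqrt hg.ne')).congr_deriv ?_
  unfold lowerAmplitude lowerLogDeriv
  have hs := sqrt_pos.2 hg
  have hs2 := sq_sqrt hg.le
  set s := √((4 - lowerBiaxial κ β z) / 3)
  have hq2 : lowerBiaxial κ β z = 4 - 3 * s ^ 2 := by linarith
  rw [hq2]
  have : (4 : ℝ) - (4 - 3 * s ^ 2) = 3 * s ^ 2 := by ring
  rw [this]
  field_simp
  ring

lemma hasDerivAt_lowerLogDeriv (hκ : 1 ≤ κ) (hβ : 0 < β) (hz : 0 < z) :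
    HasDerivAt (lowerLogDeriv κ β)
      (κ / (2 * (z + β) ^ 2) - κ * β / 2 * (lowerBiaxial κ β z /
        ((4 - lowerBiaxial κ β z) * (z * (z + β)) ^ 2) *
          (4 * κ * β / (4 - lowerBiaxial κ β z) - 2 * z - β))) z := by
  have hq := lowerBiaxial_lt_one hκ hβ hz
  have hy := add_pos hz hβ
  have hg : 0 < 4 - lowerBiaxial κ β z := by linarith
  refine ((((hasDerivAt_const z (κ : ℝ)).fun_div (((hasDerivAt_id z).add_const β).const_mul 2)
    (by simp only [id]; positivity)).fun_neg).fun_sub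
    (((hasDerivAt_lowerBiaxial hβ hz).const_mul (κ * β)).fun_div
      ((((hasDerivAt_lowerBiaxial hβ hz).const_sub 4).const_mul 2).fun_mul
        ((hasDerivAt_id z).fun_mul ((hasDerivAt_id z).add_const β)))
      (by simp only [id]; positivity))).congr_deriv ?_
  simp only [id]
  set q := lowerBiaxial κ β z
  field_simp
  ring

lemma upper_supersolution (hα : 0 < α) (hμ : 0 < μ) (h : μ * α ≤ κ) (hz : 0 < z) :
    4 * (z * ((κ / 2) * (κ / 2 + 1) * upperAmplitude κ α z / (z + α) ^ 2) +
      (κ + 1) * (-(κ / 2) * upperAmplitude κ α z / (z + α))) ≤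
    amplitudeTerm κ μ η z (upperAmplitude κ α z) 1 := by
  have hy := add_pos hz hα
  have hS := upperAmplitude_pos (κ := κ) hα hz
  have h1 := one_sub_div_pow_le (κ := κ) hα hz
  unfold amplitudeTerm
  rw [pow_mul_upperAmplitude_sq hα hz]
  set S := upperAmplitude κ α z
  have hσ : z / (z + α) ≤ 1 := by rw [div_le_one hy]; linarith
  have hκ : (0 : ℝ) ≤ κ := by positivity
  calc _ = 2 * κ * S / (z + α) * ((κ / 2 + 1) * (z / (z + α)) - κ - 1) := by field_simp; ring
    _ ≤ 2 * κ * S / (z + α) * (-(κ / 2)) := by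
        refine mul_le_mul_of_nonneg_left ?_ (by positivity)
        nlinarith
    _ = S * (κ / (z + α)) * (-κ) := by ring
    _ ≤ S * (κ / (z + α)) * (-(μ * α)) :=
        mul_le_mul_of_nonneg_left (by linarith) (by positivity)
    _ = μ * S * (-(κ * α / (z + α))) := by ring
    _ ≤ _ := mul_le_mul_of_nonneg_left (by linarith) (by positivity)

lemma lower_biaxial_subsolution (hκ : 1 ≤ κ) (hβ : 0 < β) (hμ : 0 < μ) (hη : |η| < 1)
    (h : 4 * κ ≤ μ * (1 + η) * β) (hz : 0 < z) :
    biaxialTerm κ μ η z (lowerAmplitude κ β z) (lowerBiaxial κ β z) ≤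
    4 * (z * (κ * β * lowerBiaxial κ β z * (κ * β - 2 * z - β) / (z * (z + β)) ^ 2) +
      κ * β * lowerBiaxial κ β z / (z * (z + β))) := by
  have hy := add_pos hz hβ
  have hq0 := lowerBiaxial_pos (κ := κ) hβ hz
  have hq1 := lowerBiaxial_lt_one hκ hβ hz
  have hq2 := lowerBiaxial_le hκ hβ hz
  obtain ⟨hη1, hη2⟩ := abs_lt.1 hη
  unfold biaxialTerm
  rw [pow_mul_lowerAmplitude_sq hκ hβ hz]
  set q := lowerBiaxial κ β z
  have hσ : z / (z + β) = 1 - β / (z + β) := by field_simp; ring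
  rw [hσ] at hq2
  have hρ : β / (z + β) ≤ 1 := by rw [div_le_one hy]; linarith
  have hκ' : (0 : ℝ) ≤ κ := by positivity
  calc _ = -(μ * q / 3 * (1 + η) * ((1 - q) * (3 + (1 - q) + (1 - η * (1 - q))))) := by ring
    _ ≤ -(μ * q / 3 * (1 + η) * ((β / (z + β)) * 3)) := by
        refine neg_le_neg (mul_le_mul_of_nonneg_left ?_ ?_)
        · refine mul_le_mul (by linarith) ?_ (by norm_num) (by linarith)
          nlinarith
        · have : 0 ≤ 1 + η := by linarith
          positivity
    _ = -(q / (z + β) * (μ * (1 + η) * β)) := by ring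
    _ ≤ -(q / (z + β) * (4 * κ)) :=
        neg_le_neg (mul_le_mul_of_nonneg_left h (by positivity))
    _ ≤ -(q / (z + β) * (4 * κ)) * (β / (z + β)) := by
        have : 0 ≤ q / (z + β) * (4 * κ) := by positivity
        nlinarith
    _ ≤ 4 * κ * β * q / (z * (z + β) ^ 2) * (κ * β) +
          -(q / (z + β) * (4 * κ)) * (β / (z + β)) := by
        have : 0 ≤ 4 * κ * β * q / (z * (z + β) ^ 2) * (κ * β) := by positivity
        linarith
    _ = _ := by field_simp; ring

/-- With `ρ = β / (z + β)`, `m = (4 - 2q) / (4 - q)` and `E = κρm`, this bounds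
`E² - κ² + 2zE'` from below. -/
lemma log_derivative_bound {K ρ q : ℝ} (hK : 1 ≤ K) (hρ : 0 < ρ) (hq : 0 < q)
    (hqρ : q ≤ 1 - ρ) :
    -6 * K ^ 2 * (1 - ρ) ≤ (K * ρ * (1 - q / (4 - q))) ^ 2 - K ^ 2
      - 2 * K * ρ * (1 - ρ) * (1 - q / (4 - q)) - 8 * K ^ 2 * ρ ^ 2 * q / (4 - q) ^ 2 := by
  have h4 : 3 ≤ 4 - q := by linarith
  obtain ⟨w, hw⟩ : ∃ w, w = 1 / (4 - q) := ⟨_, rfl⟩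
  have hw0 : 0 < w := by rw [hw]; positivity
  have hw3 : w ≤ 1 / 3 := by rw [hw]; exact one_div_le_one_div_of_le (by norm_num) h4
  have e1 : q / (4 - q) = q * w := by rw [hw]; ring
  have e2 : 8 * K ^ 2 * ρ ^ 2 * q / (4 - q) ^ 2 = 8 * K ^ 2 * (ρ ^ 2 * q * w ^ 2) := by
    rw [hw]; field_simp
  rw [e1, e2]
  have hqw0 : 0 ≤ q * w := by positivity
  have hqw : q * w ≤ (1 - ρ) / 3 := by nlinarith
  have hw2 : w ^ 2 ≤ 1 / 9 := by nlinarith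
  have hρ2 : ρ ^ 2 ≤ 1 := by nlinarith
  have a1 : ρ ^ 2 * q * w ^ 2 ≤ (1 - ρ) / 9 := by
    have : ρ ^ 2 * q ≤ 1 - ρ := by nlinarith
    nlinarith [sq_nonneg w]
  have a2 : 2 * K * ρ * (1 - ρ) * (1 - q * w) ≤ K ^ 2 * (2 * (1 - ρ)) := by
    have b1 : ρ * (1 - q * w) ≤ 1 := by nlinarith
    have b2 : K ≤ K ^ 2 := by nlinarith
    have b3 : 0 ≤ K * (1 - ρ) := mul_nonneg (by linarith) (by linarith)
    have b4 : 0 ≤ (K ^ 2 - K) * (1 - ρ) := mul_nonneg (by linarith) (by linarith)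
    nlinarith
  have a3 : 1 - (ρ * (1 - q * w)) ^ 2 ≤ 8 / 3 * (1 - ρ) := by
    have c0 : ρ * (q * w) ≤ (1 - ρ) / 3 := by nlinarith
    have c1 : 1 - ρ * (1 - q * w) ≤ 4 / 3 * (1 - ρ) := by linarith
    have c2 : 0 ≤ 1 - ρ * (1 - q * w) := by nlinarith
    nlinarith
  have hK2 : 0 ≤ K ^ 2 := by positivity
  have d1 := mul_le_mul_of_nonneg_left a1 hK2
  have d3 := mul_le_mul_of_nonneg_left a3 hK2
  have d4 : 0 ≤ K ^ 2 * (1 - ρ) := mul_nonneg hK2 (by linarith)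
  have e : (K * ρ * (1 - q * w)) ^ 2 = K ^ 2 * (ρ * (1 - q * w)) ^ 2 := by ring
  rw [e]
  linarith

lemma lower_amplitude_subsolution (hκ : 1 ≤ κ) (hβ : 0 < β) (hμ : 0 < μ) (hη : |η| < 1)
    (h : 9 * κ ^ 2 ≤ μ * (1 - η ^ 2) * β) (hz : 0 < z) :
    amplitudeTerm κ μ η z (lowerAmplitude κ β z) (lowerBiaxial κ β z) ≤
    4 * (z * (lowerAmplitude κ β z * lowerLogDeriv κ β z * lowerLogDeriv κ β z +
      lowerAmplitude κ β z * (κ / (2 * (z + β) ^ 2) - κ * β / 2 * (lowerBiaxial κ β z /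
        ((4 - lowerBiaxial κ β z) * (z * (z + β)) ^ 2) *
          (4 * κ * β / (4 - lowerBiaxial κ β z) - 2 * z - β)))) +
      (κ + 1) * (lowerAmplitude κ β z * lowerLogDeriv κ β z)) := by
  have hy := add_pos hz hβ
  have hq0 := lowerBiaxial_pos (κ := κ) hβ hz
  have hq1 := lowerBiaxial_lt_one hκ hβ hz
  have hq2 := lowerBiaxial_le hκ hβ hz
  have hA := lowerAmplitude_pos hκ hβ hz
  have hη2 : η ^ 2 < 1 := (sq_lt_one_iff_abs_lt_one η).2 hη
  have hPA := pow_mul_lowerAmplitude_sq hκ hβ hz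
  unfold amplitudeTerm lowerLogDeriv
  rw [hPA]
  set q := lowerBiaxial κ β z
  set A := lowerAmplitude κ β z
  have hσ : z / (z + β) = 1 - β / (z + β) := by field_simp; ring
  rw [hσ] at hq2
  have hb := log_derivative_bound (K := κ) (by exact_mod_cast hκ) (div_pos hβ hy) hq0 hq2
  have h4 : 0 < 4 - q := by linarith
  calc _ = -(A * (μ * (1 - η ^ 2)) / 3 * ((1 - q) * (3 - q))) := by ring
    _ ≤ -(A * (μ * (1 - η ^ 2)) / 3 * ((β / (z + β)) * 2)) := by
        refine neg_le_neg (mul_le_mul_of_nonneg_left ?_ ?_)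
        · exact mul_le_mul (by linarith) (by linarith) (by norm_num) (by linarith)
        · have : 0 ≤ 1 - η ^ 2 := by linarith
          positivity
    _ = A * 2 / 3 / (z + β) * -(μ * (1 - η ^ 2) * β) := by ring
    _ ≤ A * 2 / 3 / (z + β) * -(9 * κ ^ 2) :=
        mul_le_mul_of_nonneg_left (neg_le_neg h) (by positivity)
    _ = A / z * (-6 * κ ^ 2 * (1 - β / (z + β))) := by rw [← hσ]; field_simp; ring
    _ ≤ _ := mul_le_mul_of_nonneg_left hb (by positivity)
    _ = _ := by field_simp; ring

end Barriers

section Sources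


variable {κ : ℕ} {μ η α β z A A' q q' M : ℝ}

lemma amplitudeSource_mono (hμ : 0 < μ) (hη : |η| < 1) (hz : 0 < z) (hA : 0 ≤ A) (hAA : A ≤ A')
    (hP : z ^ κ * A' ^ 2 ≤ 1) (hq : 0 ≤ q) (hqq : q ≤ q') (hq1 : q' ≤ 1) :
    amplitudeSource κ μ η z A q ≤ amplitudeSource κ μ η z A' q' := by
  have hη2 : η ^ 2 < 1 := (sq_lt_one_iff_abs_lt_one η).2 hη
  have hη0 := sq_nonneg η
  have hzκ : 0 < z ^ κ := by positivity
  have hA' : 0 ≤ A' := hA.trans hAA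
  unfold amplitudeSource amplitudeTerm
  set Z := z ^ κ
  have h1 : (1 - q') * (3 - q') ≤ (1 - q) * (3 - q) := by nlinarith
  have h2 : (1 - q) * (3 - q) ≤ 3 := by nlinarith
  have h20 : 0 ≤ (1 - q) * (3 - q) := by nlinarith
  have h3 : η ^ 2 / 3 * ((1 - q) * (3 - q)) ≤ 1 := by nlinarith
  have h4 : A' * (η ^ 2 / 3 * ((1 - q') * (3 - q'))) ≤
      A' * (η ^ 2 / 3 * ((1 - q) * (3 - q))) := by gcongr
  have h5 : Z * (A' ^ 2 + A * A' + A ^ 2) ≤ 3 := by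
    have : A' ^ 2 + A * A' + A ^ 2 ≤ 3 * A' ^ 2 := by nlinarith
    nlinarith
  have h6 : (A' - A) * (Z * (A' ^ 2 + A * A' + A ^ 2) - 1 + η ^ 2 / 3 * ((1 - q) * (3 - q))) ≤
      (A' - A) * 3 := mul_le_mul_of_nonneg_left (by linarith) (by linarith)
  have h7 : 8 * μ * (A' - A) ≤
      (4 * (2 * μ) ^ 2 * z + 4 * (2 * μ) * (κ + 1)) * (A' - A) := by
    refine mul_le_mul_of_nonneg_right ?_ (by linarith)
    have : 0 ≤ 4 * (2 * μ) ^ 2 * z + 8 * μ * κ := by positivity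
    linarith
  have h8 : 0 ≤ μ * (A' - A) := mul_nonneg hμ.le (by linarith)
  have h9 := mul_le_mul_of_nonneg_left h4 hμ.le
  have h10 := mul_le_mul_of_nonneg_left h6 hμ.le
  linarith

lemma biaxial_factor_bounds (hη : |η| < 1) (hq : 0 ≤ q) (hq1 : q ≤ 1) :
    0 < 1 - η + η * q ∧ 1 - η + η * q < 2 := by
  obtain ⟨h1, h2⟩ := abs_lt.1 hη
  constructor <;> nlinarith

lemma biaxialSource_mono (hμ : 0 < μ) (hη : |η| < 1) (hz : 0 < z) (hA : 0 ≤ A) (hAA : A ≤ A')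
    (hP : z ^ κ * A' ^ 2 ≤ 1) (hq : 0 ≤ q) (hqq : q ≤ q') (hq1 : q' ≤ 1) :
    biaxialSource κ μ η z A q ≤ biaxialSource κ μ η z A' q' := by
  have hzκ : 0 < z ^ κ := by positivity
  have hA' : 0 ≤ A' := hA.trans hAA
  obtain ⟨w1, w2⟩ := biaxial_factor_bounds hη hq (hqq.trans hq1)
  obtain ⟨w1', w2'⟩ := biaxial_factor_bounds hη (hq.trans hqq) hq1
  obtain ⟨hη1, hη2⟩ := abs_lt.1 hη
  unfold biaxialSource biaxialTerm
  have hPP : z ^ κ * A ^ 2 ≤ z ^ κ * A' ^ 2 := by gcongr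
  set R := z ^ κ * A ^ 2
  set R' := z ^ κ * A' ^ 2
  have e : 3 - η + η * q = (1 - η + η * q) + 2 := by ring
  have e' : 3 - η + η * q' = (1 - η + η * q') + 2 := by ring
  have hd : (1 - η + η * q') - (1 - η + η * q) = η * (q' - q) := by ring
  rw [e, e']
  set W := 1 - η + η * q
  set W' := 1 - η + η * q'
  have hR : 0 ≤ R := by positivity
  have d : 0 ≤ q' - q := by linarith
  have h1 : W' * (W' + 2) * (q' - q) ≤ 8 * (q' - q) :=
    mul_le_mul_of_nonneg_right (by nlinarith) d
  have h2 : q * (W' - W) * (W' + W + 2) ≤ 6 * (q' - q) := by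
    rw [hd]
    have : q * η * (W' + W + 2) ≤ 6 := by
      have : q * η ≤ 1 := by nlinarith
      nlinarith
    nlinarith
  have h3 : W' * (W' + 2) * q' - W * (W + 2) * q =
    W' * (W' + 2) * (q' - q) + q * (W' - W) * (W' + W + 2) := by ring
  have h4 : R * (2 - q) - R' * (2 - q') ≤ q' - q := by nlinarith
  have h5 : μ * (W' * (W' + 2) * q' / 3 - R' * (2 - q')) - μ * (W * (W + 2) * q / 3 - R * (2 - q))
      ≤ μ * (8 * (q' - q)) := by
    rw [← mul_sub]
    exact mul_le_mul_of_nonneg_left (by linarith) hμ.le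
  have h6 : 0 ≤ (4 * (2 * μ) ^ 2 * z) * (q' - q) := by positivity
  linarith

lemma abs_amplitudeSource_le (hμ : 0 < μ) (hη : |η| < 1) (hz : 0 < z) (hA : 0 ≤ A) (hAM : A ≤ M)
    (hP : z ^ κ * A ^ 2 ≤ 1) (hq : 0 ≤ q) (hq1 : q ≤ 1) :
    |amplitudeSource κ μ η z A q| ≤ (16 * μ ^ 2 + 8 * μ * (κ + 1) + 10 * μ) * (M + 1) * (1 + z) := by
  have hη2 : η ^ 2 < 1 := (sq_lt_one_iff_abs_lt_one η).2 hη
  have hη0 := sq_nonneg η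
  have hzκ : 0 ≤ z ^ κ * A ^ 2 := by positivity
  unfold amplitudeSource amplitudeTerm
  set R := z ^ κ * A ^ 2
  have h2 : (1 - q) * (3 - q) ≤ 3 := by nlinarith
  have h20 : 0 ≤ (1 - q) * (3 - q) := by nlinarith
  have h3 : η ^ 2 / 3 * ((1 - q) * (3 - q)) ≤ 1 := by nlinarith
  have h30 : 0 ≤ η ^ 2 / 3 * ((1 - q) * (3 - q)) := by positivity
  set c := η ^ 2 / 3 * ((1 - q) * (3 - q))
  have e : (4 * (2 * μ) ^ 2 * z + 4 * (2 * μ) * (κ + 1)) * A - μ * A * (R - 1 + c) =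
    (16 * μ ^ 2 * z + 8 * μ * (κ + 1) - μ * (R - 1 + c)) * A := by ring
  have hκ : (0 : ℝ) ≤ κ := by positivity
  have h4 : μ * (R - 1 + c) ≤ μ := by nlinarith
  have h5 : -μ ≤ μ * (R - 1 + c) := by nlinarith
  have h6 : 0 ≤ 16 * μ ^ 2 * z + 8 * μ * κ := by positivity
  rw [e, abs_mul, abs_of_nonneg hA, abs_of_nonneg (by linarith)]
  have h7 : 16 * μ ^ 2 * z + 8 * μ * (κ + 1) - μ * (R - 1 + c) ≤
      (16 * μ ^ 2 + 8 * μ * (κ + 1) + 10 * μ) * (1 + z) := by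
    have : 0 ≤ 16 * μ ^ 2 + (8 * μ * (κ + 1) + 10 * μ) * z := by positivity
    linarith
  calc _ ≤ (16 * μ ^ 2 + 8 * μ * (κ + 1) + 10 * μ) * (1 + z) * (M + 1) :=
        mul_le_mul h7 (by linarith) hA (by positivity)
    _ = _ := by ring

lemma abs_biaxialSource_le (hμ : 0 < μ) (hη : |η| < 1) (hz : 0 < z) (hM : 0 ≤ M)
    (hP : z ^ κ * A ^ 2 ≤ 1) (hq : 0 ≤ q) (hq1 : q ≤ 1) :
    |biaxialSource κ μ η z A q| ≤ (16 * μ ^ 2 + 8 * μ * (κ + 1) + 10 * μ) * (M + 1) * (1 + z) := by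
  have hzκ : 0 ≤ z ^ κ * A ^ 2 := by positivity
  obtain ⟨w1, w2⟩ := biaxial_factor_bounds hη hq hq1
  unfold biaxialSource biaxialTerm
  set R := z ^ κ * A ^ 2
  have e : 3 - η + η * q = (1 - η + η * q) + 2 := by ring
  rw [e]
  set W := 1 - η + η * q
  have h1 : W * (W + 2) * q / 3 ≤ 3 := by
    have : W * (W + 2) ≤ 8 := by nlinarith
    nlinarith
  have h10 : 0 ≤ W * (W + 2) * q / 3 := by positivity
  have h2 : R * (2 - q) ≤ 2 := by nlinarith
  have h20 : 0 ≤ R * (2 - q) := mul_nonneg hzκ (by linarith)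
  have h3 : |μ * (W * (W + 2) * q / 3 - R * (2 - q))| ≤ 3 * μ := by
    rw [abs_mul, abs_of_pos hμ, mul_comm]
    exact mul_le_mul_of_nonneg_right (abs_le.2 ⟨by linarith, by linarith⟩) hμ.le
  obtain ⟨h4, h5⟩ := abs_le.1 h3
  have h6 : 0 ≤ (16 * μ ^ 2 * z + 8 * μ) * q := by positivity
  have h7 : (16 * μ ^ 2 * z + 8 * μ) * q ≤ 16 * μ ^ 2 * z + 8 * μ :=
    mul_le_of_le_one_right (by positivity) hq1
  have h8 : 16 * μ ^ 2 * z + 18 * μ ≤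
      (16 * μ ^ 2 + 8 * μ * (κ + 1) + 10 * μ) * (M + 1) * (1 + z) := by
    have a1 : 0 ≤ 16 * μ ^ 2 + 8 * μ * κ + (8 * μ * (κ + 1) + 10 * μ) * z := by positivity
    have a2 : 0 ≤ (16 * μ ^ 2 + 8 * μ * (κ + 1) + 10 * μ) * M * (1 + z) := by positivity
    linarith
  rw [abs_le]
  constructor <;> linarith

lemma lowerAmplitude_le_upperAmplitude (hκ : 1 ≤ κ) (hα : 0 < α) (hβ : 3 * α ≤ 2 * β)
    (hz : 0 < z) : lowerAmplitude κ β z ≤ upperAmplitude κ α z := by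
  have hβ0 : 0 < β := by linarith
  refine (sq_le_sq₀ (lowerAmplitude_pos hκ hβ0 hz).le (upperAmplitude_pos hα hz).le).1 ?_
  have hq := lowerBiaxial_lt_one hκ hβ0 hz
  have h1 := one_sub_div_pow_le (κ := κ) hβ0 hz
  unfold lowerAmplitude
  rw [mul_pow, sq_sqrt (by linarith), upperAmplitude_sq hα hz, upperAmplitude_sq hβ0 hz,
    inv_mul_eq_div, div_le_iff₀ (by positivity), inv_mul_eq_div, ← div_pow]
  have h2 := one_add_mul_le_pow (a := (β - α) / (z + α)) (by
    have : 0 ≤ (β - α) / (z + α) := div_nonneg (by linarith) (by linarith)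
    linarith) κ
  have e : 1 + (β - α) / (z + α) = (z + β) / (z + α) := by field_simp; ring
  rw [e] at h2
  refine le_trans ?_ h2
  have h3 : κ * (β / 3 / (z + β)) ≤ κ * ((β - α) / (z + α)) := by
    gcongr <;> linarith
  have e2 : κ * (β / 3 / (z + β)) = κ * β / (z + β) / 3 := by ring
  change 1 - lowerBiaxial κ β z ≤ _ at h1
  linarith

lemma lowerAmplitude_le (hβ : 0 < β) (hz : 0 < z) :
    lowerAmplitude κ β z ≤ 2 * β ^ (-(κ / 2 : ℝ)) := by
  have h := upperAmplitude_le (κ := κ) hβ hz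
  have hq := lowerBiaxial_pos (κ := κ) hβ hz
  have : √((4 - lowerBiaxial κ β z) / 3) ≤ 2 := by
    rw [sqrt_le_left (by norm_num)]; linarith
  rw [mul_comm]
  exact mul_le_mul h this (sqrt_nonneg _) (by positivity)

lemma lowerBiaxial_deriv_bounds (hκ : 1 ≤ κ) (hβ : 0 < β) (hz : 0 < z) :
    0 ≤ κ * β * lowerBiaxial κ β z / (z * (z + β)) ∧
      κ * β * lowerBiaxial κ β z / (z * (z + β)) ≤ κ / β := by
  have hq := lowerBiaxial_pos (κ := κ) hβ hz
  refine ⟨by positivity, ?_⟩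
  calc _ ≤ κ * β * (z / (z + β)) / (z * (z + β)) := by
        gcongr; exact lowerBiaxial_le hκ hβ hz
    _ = κ / β * (β / (z + β)) ^ 2 := by field_simp
    _ ≤ κ / β * 1 := by
        gcongr
        refine pow_le_one₀ (by positivity) ?_
        rw [div_le_one (by positivity)]; linarith
    _ = _ := mul_one _

lemma abs_lowerLogDeriv_le (hκ : 1 ≤ κ) (hβ : 0 < β) (hz : 0 < z) :
    |lowerLogDeriv κ β z| ≤ κ / β := by
  obtain ⟨h1, h2⟩ := lowerBiaxial_deriv_bounds hκ hβ hz
  have hq := lowerBiaxial_lt_one hκ hβ hz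
  unfold lowerLogDeriv
  have e : κ * β * lowerBiaxial κ β z / (2 * (4 - lowerBiaxial κ β z) * (z * (z + β))) =
      κ * β * lowerBiaxial κ β z / (z * (z + β)) * (1 / (2 * (4 - lowerBiaxial κ β z))) := by
    have : 4 - lowerBiaxial κ β z ≠ 0 := by linarith
    field_simp
  have h3 : 1 / (2 * (4 - lowerBiaxial κ β z)) ≤ 1 / 2 :=
    one_div_le_one_div_of_le (by norm_num) (by linarith)
  have h30 : 0 ≤ 1 / (2 * (4 - lowerBiaxial κ β z)) :=
    one_div_nonneg.2 (by linarith)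
  rw [e]
  set d := κ * β * lowerBiaxial κ β z / (z * (z + β))
  set w := 1 / (2 * (4 - lowerBiaxial κ β z))
  have h4 : d * w ≤ κ / β * (1 / 2) := mul_le_mul h2 h3 h30 (by positivity)
  have h40 : 0 ≤ d * w := mul_nonneg h1 h30
  have h5 : (κ : ℝ) / (2 * (z + β)) ≤ κ / (2 * β) := by gcongr; linarith
  have h50 : 0 ≤ (κ : ℝ) / (2 * (z + β)) := by positivity
  have e2 : (κ : ℝ) / (2 * β) = κ / β * (1 / 2) := by field_simp
  rw [e2] at h5
  rw [abs_le]
  constructor <;> linarith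

end Sources

lemma HasExtension.congr {n : ℕ} {f g : ℝ → ℝ} (h : HasExtension n f)
    (hfg : ∀ z, 0 ≤ z → g z = f z) : HasExtension n g := by
  obtain ⟨e, he, hef⟩ := h
  exact ⟨e, he, fun z hz => (hef z hz).trans (hfg z hz).symm⟩

section Profile

variable {κ : ℕ} {μ η : ℝ} {A q : ℝ → ℝ}

lemma HasExtension.amplitudeSource {n : ℕ} (hA : HasExtension n A) (hq : HasExtension n q) :
    HasExtension n fun z => amplitudeSource κ μ η z (A z) (q z) := by
  obtain ⟨a, ha, haA⟩ := hA
  obtain ⟨b, hb, hbq⟩ := hq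
  refine ⟨fun z => _root_.amplitudeSource κ μ η z (a z) (b z), ?_,
    fun z hz => by simp only [haA z hz, hbq z hz]⟩
  unfold _root_.amplitudeSource amplitudeTerm
  fun_prop

lemma HasExtension.biaxialSource {n : ℕ} (hA : HasExtension n A) (hq : HasExtension n q) :
    HasExtension n fun z => biaxialSource κ μ η z (A z) (q z) := by
  obtain ⟨a, ha, haA⟩ := hA
  obtain ⟨b, hb, hbq⟩ := hq
  refine ⟨fun z => _root_.biaxialSource κ μ η z (a z) (b z), ?_,
    fun z hz => by simp only [haA z hz, hbq z hz]⟩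
  unfold _root_.biaxialSource biaxialTerm
  fun_prop

lemma exists_fixed_profile (hκ : 1 ≤ κ) (hμ : 0 < μ) (hη : |η| < 1) :
    ∃ (A q : ℝ → ℝ) (C β : ℝ), 0 < β ∧
      LinearGrowth C (fun z => amplitudeSource κ μ η z (A z) (q z)) ∧
      LinearGrowth C (fun z => biaxialSource κ μ η z (A z) (q z)) ∧
      (∀ z, 0 ≤ z → A z =
        green κ (2 * μ) (fun z => amplitudeSource κ μ η z (A z) (q z)) z) ∧
      (∀ z, 0 ≤ z → q z =
        green 0 (2 * μ) (fun z => biaxialSource κ μ η z (A z) (q z)) z) ∧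
      ∀ z, 0 < z → 0 < A z ∧
        lowerBiaxial κ β z * (4 - lowerBiaxial κ β z) / 3 ≤ z ^ κ * A z ^ 2 ∧
        z ^ κ * A z ^ 2 ≤ 1 ∧ lowerBiaxial κ β z ≤ q z ∧ q z ≤ 1 := by
  obtain ⟨hη1, hη2⟩ := abs_lt.1 hη
  have hηs : 0 < 1 - η ^ 2 := by linarith [(sq_lt_one_iff_abs_lt_one η).2 hη]
  have hκ0 : (0 : ℝ) < κ := by exact_mod_cast hκ
  have hη3 : 0 < 1 + η := by linarith
  set α : ℝ := κ / μ with hαdef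
  have hα : 0 < α := by positivity
  have hμα : μ * α = κ := by rw [hαdef]; field_simp
  set β : ℝ := 9 * κ ^ 2 / (μ * (1 - η ^ 2)) + 4 * κ / (μ * (1 + η)) + 3 * α with hβdef
  have hb1 : 0 < 9 * κ ^ 2 / (μ * (1 - η ^ 2)) := by positivity
  have hb2 : 0 < 4 * κ / (μ * (1 + η)) := by positivity
  have hβ : 0 < β := by positivity
  have hβA : 9 * κ ^ 2 ≤ μ * (1 - η ^ 2) * β := by
    rw [← div_le_iff₀' (by positivity)]; linarith
  have hβq : 4 * κ ≤ μ * (1 + η) * β := by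
    rw [← div_le_iff₀' (by positivity)]; linarith
  set M := α ^ (-(κ / 2 : ℝ))
  have hM : 0 ≤ M := by positivity
  set C := (16 * μ ^ 2 + 8 * μ * (κ + 1) + 10 * μ) * (M + 1)
  have hord : ∀ z, 0 < z → lowerAmplitude κ β z ≤ upperAmplitude κ α z := fun z hz =>
    lowerAmplitude_le_upperAmplitude hκ hα (by linarith) hz
  have hupper : ∀ z, 0 < z → z ^ κ * upperAmplitude κ α z ^ 2 ≤ 1 := by
    intro z hz
    rw [pow_mul_upperAmplitude_sq hα hz]
    refine pow_le_one₀ (by positivity) ?_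
    rw [div_le_one (by positivity)]; linarith
  have hbox : ∀ z A, 0 < z → A ∈ Icc (lowerAmplitude κ β z) (upperAmplitude κ α z) →
      0 < A ∧ z ^ κ * A ^ 2 ≤ 1 := by
    intro z A hz hA
    have h0 := (lowerAmplitude_pos hκ hβ hz).trans_le hA.1
    refine ⟨h0, le_trans ?_ (hupper z hz)⟩
    have := hA.2
    gcongr
  have hq0 : ∀ z, 0 < z → 0 < lowerBiaxial κ β z := fun z hz => lowerBiaxial_pos hβ hz
  have hq1 : ∀ z, 0 < z → lowerBiaxial κ β z ≤ 1 := fun z hz =>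
    (lowerBiaxial_lt_one hκ hβ hz).le
  have mu : ∀ γ : ℝ, Measurable (upperAmplitude κ γ) := fun γ =>
    (measurable_id.add_const γ).pow_const _
  have mq : Measurable (lowerBiaxial κ β) :=
    (measurable_id.div (measurable_id.add_const β)).pow_const κ
  have ml : Measurable (lowerAmplitude κ β) :=
    (mu β).mul (((measurable_const.sub mq).div_const 3).sqrt)
  have mF : Continuous fun p : ℝ × ℝ × ℝ => amplitudeSource κ μ η p.1 p.2.1 p.2.2 := by
    unfold amplitudeSource amplitudeTerm; fun_prop
  have mH : Continuous fun p : ℝ × ℝ × ℝ => biaxialSource κ μ η p.1 p.2.1 p.2.2 := by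
    unfold biaxialSource biaxialTerm; fun_prop
  have bF : ∀ z A q, 0 < z → A ∈ Icc (lowerAmplitude κ β z) (upperAmplitude κ α z) →
      q ∈ Icc (lowerBiaxial κ β z) 1 → |amplitudeSource κ μ η z A q| ≤ C * (1 + z) :=
    fun z A q hz hA hq => abs_amplitudeSource_le hμ hη hz (hbox z A hz hA).1.le
      (hA.2.trans (upperAmplitude_le hα hz)) (hbox z A hz hA).2 ((hq0 z hz).le.trans hq.1) hq.2
  have bH : ∀ z A q, 0 < z → A ∈ Icc (lowerAmplitude κ β z) (upperAmplitude κ α z) →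
      q ∈ Icc (lowerBiaxial κ β z) 1 → |biaxialSource κ μ η z A q| ≤ C * (1 + z) :=
    fun z A q hz hA hq => abs_biaxialSource_le hμ hη hz hM (hbox z A hz hA).2
      ((hq0 z hz).le.trans hq.1) hq.2
  have lF : ∀ A q : ℝ → ℝ, Measurable A → Measurable q →
      (∀ z, 0 < z → A z ∈ Icc (lowerAmplitude κ β z) (upperAmplitude κ α z)) →
      (∀ z, 0 < z → q z ∈ Icc (lowerBiaxial κ β z) 1) →
      LinearGrowth C (fun z => amplitudeSource κ μ η z (A z) (q z)) :=
    fun A q mA mq hA hq => ⟨mF.measurable.comp (measurable_id.prodMk (mA.prodMk mq)),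
      fun z hz => bF z _ _ hz (hA z hz) (hq z hz)⟩
  have lH : ∀ A q : ℝ → ℝ, Measurable A → Measurable q →
      (∀ z, 0 < z → A z ∈ Icc (lowerAmplitude κ β z) (upperAmplitude κ α z)) →
      (∀ z, 0 < z → q z ∈ Icc (lowerBiaxial κ β z) 1) →
      LinearGrowth C (fun z => biaxialSource κ μ η z (A z) (q z)) :=
    fun A q mA mq hA hq => ⟨mH.measurable.comp (measurable_id.prodMk (mA.prodMk mq)),
      fun z hz => bH z _ _ hz (hA z hz) (hq z hz)⟩
  have inAl : ∀ z, 0 < z → lowerAmplitude κ β z ∈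
      Icc (lowerAmplitude κ β z) (upperAmplitude κ α z) := fun z hz => ⟨le_rfl, hord z hz⟩
  have inAu : ∀ z, 0 < z → upperAmplitude κ α z ∈
      Icc (lowerAmplitude κ β z) (upperAmplitude κ α z) := fun z hz => ⟨hord z hz, le_rfl⟩
  have inql : ∀ z, 0 < z → lowerBiaxial κ β z ∈ Icc (lowerBiaxial κ β z) 1 :=
    fun z hz => ⟨le_rfl, hq1 z hz⟩
  have inqu : ∀ z, 0 < z → (1 : ℝ) ∈ Icc (lowerBiaxial κ β z) 1 :=
    fun z hz => ⟨hq1 z hz, le_rfl⟩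
  have ha : 0 < 2 * μ := by positivity
  obtain ⟨A, q, hA, hq, eA, eq, hb⟩ := exists_green_fixed_point (κ := κ) (C := C) ha mF mH
    (Al := lowerAmplitude κ β) (Au := upperAmplitude κ α) (ql := lowerBiaxial κ β)
    (qu := fun _ => 1) ml (mu α) mq measurable_const hord hq1 bF bH
    (fun z A A' q q' hz hA hA' hq hq' hAA hqq => amplitudeSource_mono hμ hη hz
      (hbox z A hz hA).1.le hAA (hbox z A' hz hA').2 ((hq0 z hz).le.trans hq.1) hqq hq'.2)
    (fun z A A' q q' hz hA hA' hq hq' hAA hqq => biaxialSource_mono hμ hη hz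
      (hbox z A hz hA).1.le hAA (hbox z A' hz hA').2 ((hq0 z hz).le.trans hq.1) hqq hq'.2)
    (fun z hz => by
      refine le_green (lF _ _ ml mq inAl inql) ha
        (fun z hz => hasDerivAt_lowerAmplitude hκ hβ hz)
        (fun z hz => (hasDerivAt_lowerAmplitude hκ hβ hz).fun_mul
          (hasDerivAt_lowerLogDeriv hκ hβ hz))
        (K := 2 * β ^ (-(κ / 2 : ℝ)) * (1 + κ / β)) (fun z hz => ?_) (fun z hz => ?_)
        (fun z hz => ?_) hz
      · rw [abs_of_pos (lowerAmplitude_pos hκ hβ hz)]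
        refine (lowerAmplitude_le hβ hz).trans (le_mul_of_one_le_right (by positivity) ?_)
        have : 0 < κ / β := by positivity
        linarith
      · rw [abs_mul, abs_of_pos (lowerAmplitude_pos hκ hβ hz)]
        refine mul_le_mul (lowerAmplitude_le hβ hz) ?_ (abs_nonneg _) (by positivity)
        linarith [abs_lowerLogDeriv_le hκ hβ hz]
      · have := lower_amplitude_subsolution hκ hβ hμ hη hβA hz
        unfold amplitudeSource
        linarith)
    (fun z hz => by
      refine le_green (lH _ _ ml mq inAl inql) ha
        (fun z hz => hasDerivAt_lowerBiaxial hβ hz)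
        (fun z hz => hasDerivAt_lowerBiaxial_deriv hβ hz)
        (K := 1 + κ / β) (fun z hz => ?_) (fun z hz => ?_)
        (fun z hz => ?_) hz
      · rw [abs_of_pos (lowerBiaxial_pos hβ hz)]
        have : 0 < κ / β := by positivity
        linarith [hq1 z hz]
      · obtain ⟨h1, h2⟩ := lowerBiaxial_deriv_bounds hκ hβ hz
        rw [abs_of_nonneg h1]
        linarith
      · have := lower_biaxial_subsolution hκ hβ hμ hη hβq hz
        unfold biaxialSource
        push_cast
        linarith)
    (fun z hz => by
      refine green_le (lF _ _ (mu α) measurable_const inAu inqu) ha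
        (fun z hz => hasDerivAt_upperAmplitude hα hz)
        (fun z hz => hasDerivAt_upperAmplitude_deriv hα hz)
        (K := M * (1 + κ / 2 / α)) (fun z hz => ?_) (fun z hz => ?_)
        (fun z hz => ?_) hz
      · rw [abs_of_pos (upperAmplitude_pos hα hz)]
        refine (upperAmplitude_le hα hz).trans (le_mul_of_one_le_right (by positivity) ?_)
        have : 0 < κ / 2 / α := by positivity
        linarith
      · have h0 := upperAmplitude_pos (κ := κ) hα hz
        have e : -(κ / 2) * upperAmplitude κ α z / (z + α) =
          -(upperAmplitude κ α z * (κ / 2 / (z + α))) := by ring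
        rw [e, abs_neg, abs_of_pos (by positivity)]
        refine mul_le_mul (upperAmplitude_le hα hz) ?_ (by positivity) (by positivity)
        have : (κ : ℝ) / 2 / (z + α) ≤ κ / 2 / α := by gcongr; linarith
        linarith
      · have := upper_supersolution (η := η) hα hμ hμα.le hz
        unfold amplitudeSource
        linarith)
    (fun z hz => by
      refine green_le (lH _ _ (mu α) measurable_const inAu inqu) ha
        (S1 := fun _ => 0) (S2 := fun _ => 0)
        (fun z hz => hasDerivAt_const z 1) (fun z hz => hasDerivAt_const z 0)
        (K := 1) (fun z hz => by simp) (fun z hz => by simp)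
        (fun z hz => ?_) hz
      have h := mul_le_mul_of_nonneg_left (hupper z hz) hμ.le
      unfold biaxialSource biaxialTerm
      push_cast
      linarith)
  refine ⟨A, q, C, β, hβ, hA, hq, eA, eq, fun z hz => ?_⟩
  obtain ⟨h1, h2⟩ := hb z hz
  refine ⟨(hbox z _ hz h1).1, ?_, (hbox z _ hz h1).2, h2.1, h2.2⟩
  rw [← pow_mul_lowerAmplitude_sq hκ hβ hz]
  have := h1.1
  have := (lowerAmplitude_pos hκ hβ hz).le
  gcongr

theorem exists_profile (hκ : 1 ≤ κ) (hμ : 0 < μ) (hη : |η| < 1) :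
    ∃ (A q : ℝ → ℝ) (β : ℝ), 0 < β ∧
      (∀ n, HasExtension n A) ∧ (∀ n, HasExtension n q) ∧
      (∃ G : ℝ → ℝ, ContDiff ℝ 2 G ∧ (∀ z, 0 ≤ z → G z = A z) ∧
        ∀ z, 0 ≤ z → 4 * (z * deriv (deriv G) z + (κ + 1) * deriv G z) =
          amplitudeTerm κ μ η z (A z) (q z)) ∧
      (∃ G : ℝ → ℝ, ContDiff ℝ 2 G ∧ (∀ z, 0 ≤ z → G z = q z) ∧
        ∀ z, 0 ≤ z → 4 * (z * deriv (deriv G) z + deriv G z) =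
          biaxialTerm κ μ η z (A z) (q z)) ∧
      ∀ z, 0 < z → 0 < A z ∧
        lowerBiaxial κ β z * (4 - lowerBiaxial κ β z) / 3 ≤ z ^ κ * A z ^ 2 ∧
        z ^ κ * A z ^ 2 ≤ 1 ∧ lowerBiaxial κ β z ≤ q z ∧ q z ≤ 1 := by
  obtain ⟨A, q, C, β, hβ, lF, lH, eA, eq, hb⟩ := exists_fixed_profile hκ hμ hη
  have ha : 0 < 2 * μ := by positivity
  have hext : ∀ n, HasExtension n A ∧ HasExtension n q := by
    intro n
    induction n with
    | zero => exact ⟨(lF.hasExtension_zero ha).congr eA, (lH.hasExtension_zero ha).congr eq⟩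
    | succ n ih =>
      exact ⟨(lF.hasExtension_succ ha (ih.1.amplitudeSource ih.2)).congr eA,
        (lH.hasExtension_succ ha (ih.1.biaxialSource ih.2)).congr eq⟩
  refine ⟨A, q, β, hβ, fun n => (hext n).1, fun n => (hext n).2, ?_, ?_, hb⟩
  · obtain ⟨G, hG, hGA, hode⟩ := lF.exists_ode (κ := κ) ha
      ((hext 1).1.amplitudeSource (hext 1).2)
    refine ⟨G, hG, fun z hz => (hGA z hz).trans (eA z hz).symm, fun z hz => ?_⟩
    rw [hode z hz, ← eA z hz]
    unfold amplitudeSource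
    ring
  · obtain ⟨G, hG, hGA, hode⟩ := lH.exists_ode (κ := 0) ha
      ((hext 1).1.biaxialSource (hext 1).2)
    refine ⟨G, hG, fun z hz => (hGA z hz).trans (eq z hz).symm, fun z hz => ?_⟩
    have h := hode z hz
    rw [← eq z hz] at h
    push_cast at h
    rw [zero_add, one_mul] at h
    rw [h]
    unfold biaxialSource
    ring

end Profile

section Assembly

/-- The Cartesian form of `r e^{iσφ}`. -/
def planePoint (σ : ℝ) (x : ℝ × ℝ) : ℂ := (x.1 : ℂ) + (x.2 : ℂ) * (σ * Complex.I)

lemma hasDerivAt_planePoint_fst (σ x y : ℝ) :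
    HasDerivAt (fun s : ℝ => planePoint σ (s, y)) 1 x := by
  have h : HasDerivAt (fun s : ℝ => ((s : ℝ) : ℂ)) 1 x := HasDerivAt.ofReal_comp (hasDerivAt_id x)
  exact h.add_const ((y : ℂ) * (σ * Complex.I))

lemma hasDerivAt_planePoint_snd (σ x y : ℝ) :
    HasDerivAt (fun s : ℝ => planePoint σ (x, s)) (σ * Complex.I) y := by
  have h : HasDerivAt (fun s : ℝ => ((s : ℝ) : ℂ)) 1 y := HasDerivAt.ofReal_comp (hasDerivAt_id y)
  exact ((h.mul_const (σ * Complex.I)).const_add (x : ℂ)).congr_deriv (one_mul _)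

/-- Laplacian of a radial function times a homogeneous harmonic function of degree `n`. -/
lemma lap_radial_mul {G : ℝ → ℝ} (hG : ContDiff ℝ 2 G) {c c1 c2 c11 c22 : ℝ × ℝ → ℝ} {n : ℝ}
    (h1 : ∀ x y, HasDerivAt (fun s => c (s, y)) (c1 (x, y)) x)
    (h2 : ∀ x y, HasDerivAt (fun s => c (x, s)) (c2 (x, y)) y)
    (h11 : ∀ x y, HasDerivAt (fun s => c1 (s, y)) (c11 (x, y)) x)
    (h22 : ∀ x y, HasDerivAt (fun s => c2 (x, s)) (c22 (x, y)) y)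
    (harm : ∀ p, c11 p + c22 p = 0) (euler : ∀ p : ℝ × ℝ, p.1 * c1 p + p.2 * c2 p = n * c p)
    (p : ℝ × ℝ) :
    ∃ D1 D2 : ℝ → ℝ → ℝ, ∃ d1 d2 : ℝ,
      (∀ x y, HasDerivAt (fun s => G (s ^ 2 + y ^ 2) * c (s, y)) (D1 x y) x) ∧
      (∀ x y, HasDerivAt (fun s => G (x ^ 2 + s ^ 2) * c (x, s)) (D2 x y) y) ∧
      HasDerivAt (fun s => D1 s p.2) d1 p.1 ∧ HasDerivAt (fun s => D2 p.1 s) d2 p.2 ∧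
      d1 + d2 = 4 * ((p.1 ^ 2 + p.2 ^ 2) * deriv (deriv G) (p.1 ^ 2 + p.2 ^ 2) +
        (n + 1) * deriv G (p.1 ^ 2 + p.2 ^ 2)) * c p := by
  have hG' : ContDiff ℝ (1 + 1) G := by norm_num; exact hG
  have hG1 : ∀ z, HasDerivAt G (deriv G z) z :=
    fun z => (hG.differentiable (by norm_num) z).hasDerivAt
  have hG2 : ∀ z, HasDerivAt (deriv G) (deriv (deriv G) z) z := fun z =>
    (((contDiff_succ_iff_deriv.1 hG').2.2).differentiable (by norm_num) z).hasDerivAt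
  have sq1 : ∀ x y : ℝ, HasDerivAt (fun s : ℝ => s ^ 2 + y ^ 2) (2 * x) x := fun x y => by
    simpa using (hasDerivAt_pow 2 x).add_const (y ^ 2)
  have sq2 : ∀ x y : ℝ, HasDerivAt (fun s : ℝ => x ^ 2 + s ^ 2) (2 * y) y := fun x y => by
    simpa using (hasDerivAt_pow 2 y).const_add (x ^ 2)
  have lin : ∀ x : ℝ, HasDerivAt (fun s : ℝ => 2 * s) 2 x := fun x => by
    simpa using (hasDerivAt_id x).const_mul 2
  refine ⟨_, _, _, _, fun x y => ((hG1 _).comp x (sq1 x y)).fun_mul (h1 x y),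
    fun x y => ((hG1 _).comp y (sq2 x y)).fun_mul (h2 x y),
    ((((hG2 _).comp p.1 (sq1 p.1 p.2)).fun_mul (lin p.1)).fun_mul (h1 p.1 p.2)).fun_add
      (((hG1 _).comp p.1 (sq1 p.1 p.2)).fun_mul (h11 p.1 p.2)),
    ((((hG2 _).comp p.2 (sq2 p.1 p.2)).fun_mul (lin p.2)).fun_mul (h2 p.1 p.2)).fun_add
      (((hG1 _).comp p.2 (sq2 p.1 p.2)).fun_mul (h22 p.1 p.2)), ?_⟩
  simp only [Function.comp, Prod.mk.eta]
  linear_combination G (p.1 ^ 2 + p.2 ^ 2) * harm p + 4 * deriv G (p.1 ^ 2 + p.2 ^ 2) * euler p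

lemma lap_radial_add {G H : ℝ → ℝ} (hG : ContDiff ℝ 2 G) (hH : ContDiff ℝ 2 H) {κ : ℕ}
    (hκ : 1 ≤ κ) {σ : ℝ} (hσ : σ ^ 2 = 1) (L : ℂ →L[ℝ] ℝ) (a b d : ℝ) (p : ℝ × ℝ) :
    lap (fun x => a * (G (x.1 ^ 2 + x.2 ^ 2) * L (planePoint σ x ^ κ)) +
      b * H (x.1 ^ 2 + x.2 ^ 2) + d) p =
    a * (4 * ((p.1 ^ 2 + p.2 ^ 2) * deriv (deriv G) (p.1 ^ 2 + p.2 ^ 2) +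
        (κ + 1) * deriv G (p.1 ^ 2 + p.2 ^ 2)) * L (planePoint σ p ^ κ)) +
      b * (4 * ((p.1 ^ 2 + p.2 ^ 2) * deriv (deriv H) (p.1 ^ 2 + p.2 ^ 2) +
        deriv H (p.1 ^ 2 + p.2 ^ 2))) := by
  have hσ' : (σ : ℂ) ^ 2 = 1 := by exact_mod_cast hσ
  obtain ⟨D1, D2, d1, d2, hD1, hD2, hd1, hd2, hd⟩ := lap_radial_mul hG (n := κ)
    (c := fun x => L (planePoint σ x ^ κ))
    (c1 := fun x => L ((κ : ℂ) * planePoint σ x ^ (κ - 1) * 1))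
    (c2 := fun x => L ((κ : ℂ) * planePoint σ x ^ (κ - 1) * (σ * Complex.I)))
    (c11 := fun x => L ((κ : ℂ) * (((κ - 1 : ℕ) : ℂ) * planePoint σ x ^ (κ - 1 - 1) * 1) * 1))
    (c22 := fun x => L ((κ : ℂ) * (((κ - 1 : ℕ) : ℂ) * planePoint σ x ^ (κ - 1 - 1) *
      (σ * Complex.I)) * (σ * Complex.I)))
    (fun x y => L.hasFDerivAt.comp_hasDerivAt x ((hasDerivAt_planePoint_fst σ x y).fun_pow κ))
    (fun x y => L.hasFDerivAt.comp_hasDerivAt y ((hasDerivAt_planePoint_snd σ x y).fun_pow κ))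
    (fun x y => L.hasFDerivAt.comp_hasDerivAt x
      ((((hasDerivAt_planePoint_fst σ x y).fun_pow (κ - 1)).const_mul (κ : ℂ)).mul_const 1))
    (fun x y => L.hasFDerivAt.comp_hasDerivAt y
      ((((hasDerivAt_planePoint_snd σ x y).fun_pow (κ - 1)).const_mul (κ : ℂ)).mul_const
        (σ * Complex.I)))
    (fun x => by
      rw [← map_add]
      convert map_zero L using 2
      linear_combination (κ : ℂ) * (((κ - 1 : ℕ) : ℂ) * planePoint σ x ^ (κ - 1 - 1)) *
        (Complex.I ^ 2 * hσ' + Complex.I_sq))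
    (fun x => by
      rw [← smul_eq_mul, ← smul_eq_mul (a := x.2), ← smul_eq_mul (a := (κ : ℝ)), ← map_smul,
        ← map_smul, ← map_smul, ← map_add]
      congr 1
      obtain ⟨m, rfl⟩ := Nat.exists_eq_add_of_le' hκ
      simp only [Complex.real_smul, Nat.add_sub_cancel, pow_succ, planePoint]
      push_cast
      ring) p
  obtain ⟨E1, E2, e1, e2, hE1, hE2, he1, he2, he⟩ := lap_radial_mul hH (n := 0)
    (c := fun _ => 1) (c1 := fun _ => 0) (c2 := fun _ => 0) (c11 := fun _ => 0)
    (c22 := fun _ => 0) (fun x y => hasDerivAt_const x 1) (fun x y => hasDerivAt_const y 1)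
    (fun x y => hasDerivAt_const x 0) (fun x y => hasDerivAt_const y 0)
    (fun _ => by simp) (fun _ => by simp) p
  simp only [mul_one] at hE1 hE2 he
  have k1 : ∀ x y : ℝ, deriv (fun s => a * (G (s ^ 2 + y ^ 2) * L (planePoint σ (s, y) ^ κ)) +
      b * H (s ^ 2 + y ^ 2) + d) x = a * D1 x y + b * E1 x y := fun x y =>
    ((((hD1 x y).const_mul a).fun_add ((hE1 x y).const_mul b)).add_const d).deriv
  have k2 : ∀ x y : ℝ, deriv (fun s => a * (G (x ^ 2 + s ^ 2) * L (planePoint σ (x, s) ^ κ)) +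
      b * H (x ^ 2 + s ^ 2) + d) y = a * D2 x y + b * E2 x y := fun x y =>
    ((((hD2 x y).const_mul a).fun_add ((hE2 x y).const_mul b)).add_const d).deriv
  unfold lap
  simp only [k1, k2]
  rw [((hd1.const_mul a).fun_add (he1.const_mul b)).deriv,
    ((hd2.const_mul a).fun_add (he2.const_mul b)).deriv]
  linear_combination a * hd + b * he

lemma HasExtension.contDiff_comp {f : ℝ → ℝ} (hf : ∀ n, HasExtension n f)
    {E : Type*} [NormedAddCommGroup E] [NormedSpace ℝ E] {h : E → ℝ}
    (hh : ContDiff ℝ (⊤ : ℕ∞) h) (h0 : ∀ x, 0 ≤ h x) :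
    ContDiff ℝ (⊤ : ℕ∞) fun x => f (h x) := by
  rw [contDiff_infty]
  intro n
  obtain ⟨g, hg, hgf⟩ := hf n
  have e : (fun x => f (h x)) = g ∘ h := funext fun x => (hgf _ (h0 x)).symm
  rw [e]
  exact hg.comp (contDiff_infty.1 hh n)

lemma contDiff_planePoint (σ : ℝ) : ContDiff ℝ (⊤ : ℕ∞) (planePoint σ) := by
  have h1 : ContDiff ℝ (⊤ : ℕ∞) fun x : ℝ × ℝ => (x.1 : ℂ) :=
    Complex.ofRealCLM.contDiff.comp contDiff_fst
  have h2 : ContDiff ℝ (⊤ : ℕ∞) fun x : ℝ × ℝ => (x.2 : ℂ) :=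
    Complex.ofRealCLM.contDiff.comp contDiff_snd
  exact h1.add (h2.mul contDiff_const)

lemma planePoint_polar {k : ℤ} (hk0 : k ≠ 0) (r φ : ℝ) :
    planePoint k.sign (r * cos φ, r * sin φ) ^ k.natAbs =
      ((r ^ k.natAbs * cos (k * φ) : ℝ) : ℂ) + ((r ^ k.natAbs * sin (k * φ) : ℝ) : ℂ) *
        Complex.I := by
  have hk : (k : ℂ) * φ = k.natAbs * (k.sign * φ) := by
    have h := congrArg (fun m : ℤ => (m : ℂ)) (Int.sign_mul_natAbs k)
    simp only [Int.cast_mul, Int.cast_natCast] at h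
    rw [← h]; ring
  have e : planePoint k.sign (r * cos φ, r * sin φ) =
      r * (Complex.cos (k.sign * φ) + Complex.sin (k.sign * φ) * Complex.I) := by
    unfold planePoint
    rcases lt_or_gt_of_ne hk0 with h | h
    · simp [Int.sign_eq_neg_one_of_neg h]; ring
    · simp [Int.sign_eq_one_of_pos h]; ring
  rw [e, mul_pow, Complex.cos_add_sin_mul_I_pow, ← hk]
  push_cast
  ring

end Assembly

section Construction

/-- The `Q`-tensor field with amplitude `s r^κ A(r²)` and biaxiality profile
`s (1 - η + η q(r²))`. -/
noncomputable def profileTensor (κ : ℕ) (σ s η : ℝ) (A q : ℝ → ℝ) (x : ℝ × ℝ) : Mat3 :=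
  let z := x.1 ^ 2 + x.2 ^ 2
  let X := A z * (planePoint σ x ^ κ).re
  let Y := A z * (planePoint σ x ^ κ).im
  !![s / 2 * X + s * η / 6 * q z + s * (1 - η) / 6, s / 2 * Y, 0;
     s / 2 * Y, -(s / 2) * X + s * η / 6 * q z + s * (1 - η) / 6, 0;
     0, 0, -(s * η / 3) * q z - s * (1 - η) / 3]

lemma isS0_profileTensor (κ : ℕ) (σ s η : ℝ) (A q : ℝ → ℝ) (x : ℝ × ℝ) :
    isS0 (profileTensor κ σ s η A q x) := by
  constructor
  · ext i j
    fin_cases i <;> fin_cases j <;> simp [profileTensor]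
  · simp [profileTensor, Matrix.trace, Fin.sum_univ_three]
    ring

lemma matLap_profileTensor {κ : ℕ} (hκ : 1 ≤ κ) {σ s η c2 : ℝ} (hσ : σ ^ 2 = 1) {A q : ℝ → ℝ}
    (hA : ∃ G : ℝ → ℝ, ContDiff ℝ 2 G ∧ (∀ z, 0 ≤ z → G z = A z) ∧
        ∀ z, 0 ≤ z → 4 * (z * deriv (deriv G) z + (κ + 1) * deriv G z) =
          amplitudeTerm κ (c2 * s ^ 2 / 2) η z (A z) (q z))
    (hq : ∃ G : ℝ → ℝ, ContDiff ℝ 2 G ∧ (∀ z, 0 ≤ z → G z = q z) ∧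
        ∀ z, 0 ≤ z → 4 * (z * deriv (deriv G) z + deriv G z) =
          biaxialTerm κ (c2 * s ^ 2 / 2) η z (A z) (q z)) (x : ℝ × ℝ) :
    matLap (profileTensor κ σ s η A q) x =
      ELrhs (c2 * s ^ 2 * (1 - η) / 3) (c2 * s * (1 + η)) c2 (profileTensor κ σ s η A q x) := by
  obtain ⟨G, hG, hGA, hGode⟩ := hA
  obtain ⟨H, hH, hHq, hHode⟩ := hq
  have hz : ∀ x : ℝ × ℝ, 0 ≤ x.1 ^ 2 + x.2 ^ 2 := fun x => by positivity
  have key : ∀ (L : ℂ →L[ℝ] ℝ) (a b d : ℝ),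
      lap (fun x => a * (A (x.1 ^ 2 + x.2 ^ 2) * L (planePoint σ x ^ κ)) +
        b * q (x.1 ^ 2 + x.2 ^ 2) + d) x =
      a * (amplitudeTerm κ (c2 * s ^ 2 / 2) η (x.1 ^ 2 + x.2 ^ 2) (A (x.1 ^ 2 + x.2 ^ 2))
        (q (x.1 ^ 2 + x.2 ^ 2)) * L (planePoint σ x ^ κ)) +
      b * biaxialTerm κ (c2 * s ^ 2 / 2) η (x.1 ^ 2 + x.2 ^ 2) (A (x.1 ^ 2 + x.2 ^ 2))
        (q (x.1 ^ 2 + x.2 ^ 2)) := by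
    intro L a b d
    rw [← hGode _ (hz x), ← hHode _ (hz x), ← lap_radial_add hG hH hκ hσ L a b d x]
    simp only [hGA _ (hz _), hHq _ (hz _)]
  have hZ : (x.1 ^ 2 + x.2 ^ 2) ^ κ =
      (planePoint σ x ^ κ).re ^ 2 + (planePoint σ x ^ κ).im ^ 2 := by
    have h1 : Complex.normSq (planePoint σ x) = x.1 ^ 2 + x.2 ^ 2 := by
      simp only [planePoint, Complex.normSq_apply]
      simp
      linear_combination x.2 ^ 2 * hσ
    have h2 := map_pow Complex.normSq (planePoint σ x) κ
    rw [h1, Complex.normSq_apply] at h2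
    rw [← h2]; ring
  have k00 := key Complex.reCLM (s / 2) (s * η / 6) (s * (1 - η) / 6)
  have k11 := key Complex.reCLM (-(s / 2)) (s * η / 6) (s * (1 - η) / 6)
  have k01 := key Complex.imCLM (s / 2) 0 0
  have k22 := key 0 0 (-(s * η / 3)) (-(s * (1 - η) / 3))
  have kz := key 0 0 0 0
  simp only [Complex.reCLM_apply, Complex.imCLM_apply, zero_mul, mul_zero, add_zero, zero_add,
    _root_.zero_apply, ← sub_eq_add_neg, amplitudeTerm, biaxialTerm,
    hZ] at k00 k11 k01 k22 kz
  ext i j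
  simp only [matLap, Matrix.of_apply]
  fin_cases i <;> fin_cases j
  all_goals simp only [profileTensor, ELrhs, Matrix.trace, Fin.sum_univ_three, Matrix.diag_apply,
    Matrix.mul_apply, Matrix.sub_apply, Matrix.add_apply, Matrix.smul_apply, smul_eq_mul,
    Matrix.of_apply, Matrix.cons_val', Matrix.cons_val_zero, Matrix.cons_val_one, Matrix.cons_val,
    Fin.zero_eta, Fin.mk_one, Fin.reduceFinMk, Fin.isValue, Matrix.one_apply, Fin.reduceEq,
    reduceIte, k00, k11, k01, k22, kz]
  all_goals ring

lemma contDiff_profileTensor (κ : ℕ) (σ s η : ℝ) {A q : ℝ → ℝ} (hA : ∀ n, HasExtension n A)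
    (hq : ∀ n, HasExtension n q) (i j : Fin 3) :
    ContDiff ℝ (⊤ : ℕ∞) fun x => profileTensor κ σ s η A q x i j := by
  have hz : ContDiff ℝ (⊤ : ℕ∞) fun x : ℝ × ℝ => x.1 ^ 2 + x.2 ^ 2 := by fun_prop
  have h1 := HasExtension.contDiff_comp hA hz fun x => by positivity
  have h2 := HasExtension.contDiff_comp hq hz fun x => by positivity
  have h3 : ContDiff ℝ (⊤ : ℕ∞) fun x => (planePoint σ x ^ κ).re :=
    Complex.reCLM.contDiff.comp ((contDiff_planePoint σ).pow κ)
  have h4 : ContDiff ℝ (⊤ : ℕ∞) fun x => (planePoint σ x ^ κ).im :=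
    Complex.imCLM.contDiff.comp ((contDiff_planePoint σ).pow κ)
  have k1 := ((contDiff_const (c := s / 2)).mul (h1.mul h3)).add
    ((contDiff_const (c := s * η / 6)).mul h2) |>.add (contDiff_const (c := s * (1 - η) / 6))
  have k2 := ((contDiff_const (c := -(s / 2))).mul (h1.mul h3)).add
    ((contDiff_const (c := s * η / 6)).mul h2) |>.add (contDiff_const (c := s * (1 - η) / 6))
  have k3 := (contDiff_const (c := s / 2)).mul (h1.mul h4)
  have k4 := ((contDiff_const (c := -(s * η / 3))).mul h2).sub
    (contDiff_const (c := s * (1 - η) / 3))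
  fin_cases i <;> fin_cases j
  exacts [k1, k3, contDiff_const, k3, k2, contDiff_const, contDiff_const, contDiff_const, k4]

lemma profileTensor_polar {k : ℤ} (hk : k ≠ 0) (s η : ℝ) (A q : ℝ → ℝ) (r φ : ℝ) :
    profileTensor k.natAbs k.sign s η A q (r * cos φ, r * sin φ) =
      (s * (r ^ k.natAbs * A (r ^ 2))) • (vecMulVec (nvec k φ) (nvec k φ) - (1 / 2 : ℝ) • I2) +
      (-(s * (1 - η + η * q (r ^ 2))) / 2) •
        (vecMulVec e3 e3 - (1 / 3 : ℝ) • (1 : Mat3)) := by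
  have hr : (r * cos φ) ^ 2 + (r * sin φ) ^ 2 = r ^ 2 := by
    linear_combination r ^ 2 * sin_sq_add_cos_sq φ
  have h2 : (k : ℝ) * φ = 2 * (k * φ / 2) := by ring
  have hc : cos (k * φ) = 2 * cos (k * φ / 2) ^ 2 - 1 := by rw [h2, cos_two_mul]; ring_nf
  have hs : sin (k * φ) = 2 * sin (k * φ / 2) * cos (k * φ / 2) := by
    rw [h2, sin_two_mul]; ring_nf
  have h1 := sin_sq_add_cos_sq (k * φ / 2)
  ext i j
  simp only [profileTensor, planePoint_polar hk, hr, Complex.add_re, Complex.add_im,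
    Complex.ofReal_re, Complex.ofReal_im, Complex.re_ofReal_mul, Complex.im_ofReal_mul,
    Complex.I_re, Complex.I_im, hc, hs]
  fin_cases i <;> fin_cases j
  all_goals simp [nvec, e3, I2]
  all_goals first | ring1 | linear_combination (-(s * r ^ k.natAbs * A (r ^ 2))) * h1

lemma frobSq_profileTensor_sub {k : ℤ} (hk : k ≠ 0) (s η : ℝ) (A q : ℝ → ℝ) (r φ : ℝ) :
    frobSq (profileTensor k.natAbs k.sign s η A q (r * cos φ, r * sin φ) -
        s • (vecMulVec (nvec k φ) (nvec k φ) - (1 / 3 : ℝ) • (1 : Mat3))) =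
      s ^ 2 / 2 * (r ^ k.natAbs * A (r ^ 2) - 1) ^ 2 +
        s ^ 2 / 6 * (η * (q (r ^ 2) - 1)) ^ 2 := by
  have h1 := sin_sq_add_cos_sq (k * φ / 2)
  rw [profileTensor_polar hk]
  generalize r ^ k.natAbs * A (r ^ 2) = P
  generalize q (r ^ 2) = W
  simp [frobSq, Fin.sum_univ_three, nvec, e3, I2]
  generalize sin (k * φ / 2) = d at *
  generalize cos (k * φ / 2) = c at *
  have h3 : d ^ 2 = 1 - c ^ 2 := by linarith
  have h4 : d ^ 4 = (1 - c ^ 2) ^ 2 := by rw [← h3]; ring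
  ring_nf
  rw [h4, h3]
  ring

lemma splus_pos {a2 b2 c2 : ℝ} (hb : 0 < b2) (hc : 0 < c2) : 0 < splus a2 b2 c2 := by
  unfold splus; positivity

lemma splus_quadratic {a2 b2 c2 : ℝ} (ha : 0 < a2) (hc : 0 < c2) :
    2 * c2 * splus a2 b2 c2 ^ 2 = b2 * splus a2 b2 c2 + 3 * a2 := by
  have h := Real.sq_sqrt (show 0 ≤ b2 ^ 2 + 24 * a2 * c2 by positivity)
  unfold splus
  generalize √(b2 ^ 2 + 24 * a2 * c2) = w at *
  field_simp
  linear_combination 2 * h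

lemma profile_error_le {κ : ℕ} (hκ : 1 ≤ κ) {s η β z P W : ℝ} (hη : |η| < 1) (hβ : 0 < β)
    (hz : 0 < z) (hP0 : 0 ≤ P) (hP : P ^ 2 ≤ 1)
    (hlP : lowerBiaxial κ β z * (4 - lowerBiaxial κ β z) / 3 ≤ P ^ 2)
    (hlW : lowerBiaxial κ β z ≤ W) (hW : W ≤ 1) :
    s ^ 2 / 2 * (P - 1) ^ 2 + s ^ 2 / 6 * (η * (W - 1)) ^ 2 ≤ s ^ 2 * (κ * β / z) := by
  have hl := lowerBiaxial_pos (κ := κ) hβ hz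
  have hl1 := lowerBiaxial_lt_one hκ hβ hz
  have hrate : 1 - lowerBiaxial κ β z ≤ κ * β / z :=
    (one_sub_div_pow_le hβ hz).trans (by gcongr; linarith)
  generalize lowerBiaxial κ β z = l at *
  have hη2 : η ^ 2 ≤ 1 := by rw [← sq_abs]; nlinarith [abs_nonneg η]
  have hP1 : P ≤ 1 := by nlinarith
  have h1 : (P - 1) ^ 2 ≤ 1 - l := by nlinarith
  have h2 : (η * (W - 1)) ^ 2 ≤ 1 - l := by
    have : (W - 1) ^ 2 ≤ 1 - l := by nlinarith
    rw [mul_pow]; nlinarith [sq_nonneg (W - 1)]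
  nlinarith [sq_nonneg s, mul_le_mul_of_nonneg_left h1 (sq_nonneg s),
    mul_le_mul_of_nonneg_left h2 (sq_nonneg s), mul_le_mul_of_nonneg_left hrate (sq_nonneg s),
    mul_nonneg (sq_nonneg s) (sub_nonneg.2 hl1.le)]

theorem exists_radial_solution (a2 b2 c2 : ℝ) (ha : 0 < a2) (hb : 0 < b2) (hc : 0 < c2)
    (k : ℤ) (hk : k ≠ 0) :
    ∃ (u v : ℝ → ℝ) (Q : ℝ × ℝ → Mat3),
      ContDiff ℝ (⊤ : ℕ∞) u ∧ ContDiff ℝ (⊤ : ℕ∞) v ∧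
      (∀ r : ℝ, 0 < r → 0 < u r ∧ v r < 0) ∧
      (∀ r φ : ℝ, Q (r * cos φ, r * sin φ) = u r • E1 k φ + v r • E0) ∧
      (∀ i j, ContDiff ℝ (⊤ : ℕ∞) (fun x => Q x i j)) ∧
      (∀ x, isS0 (Q x)) ∧
      (∀ x, matLap Q x = ELrhs a2 b2 c2 (Q x)) ∧
      (∀ ε : ℝ, 0 < ε → ∃ M : ℝ, ∀ r φ : ℝ, M ≤ r →
        frobSq (Q (r * cos φ, r * sin φ)
          - splus a2 b2 c2 • (vecMulVec (nvec k φ) (nvec k φ) -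
            (1 / 3 : ℝ) • (1 : Mat3))) < ε) := by
  have hs := splus_pos (a2 := a2) hb hc
  have hsq := splus_quadratic (b2 := b2) ha hc
  set s := splus a2 b2 c2
  obtain ⟨η, hη_def⟩ : ∃ η, η = b2 / (c2 * s) - 1 := ⟨_, rfl⟩
  have hb2 : b2 = c2 * s * (1 + η) := by rw [hη_def]; field_simp; ring
  have ha2 : a2 = c2 * s ^ 2 * (1 - η) / 3 := by rw [hb2] at hsq; linarith
  have hη : |η| < 1 := by
    have h1 : 0 < 1 + η := pos_of_mul_pos_right (hb2 ▸ hb) (by positivity)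
    have h2 : 0 < 1 - η :=
      pos_of_mul_pos_right (a := c2 * s ^ 2) (by linarith) (by positivity)
    exact abs_lt.2 ⟨by linarith, by linarith⟩
  have hκ : 1 ≤ k.natAbs := Int.natAbs_pos.2 hk
  have hσ : ((k.sign : ℤ) : ℝ) ^ 2 = 1 := by
    rcases lt_or_gt_of_ne hk with h | h
    · simp [Int.sign_eq_neg_one_of_neg h]
    · simp [Int.sign_eq_one_of_pos h]
  obtain ⟨A, q, β, hβ, hA, hq, hAode, hqode, hbd⟩ :=
    exists_profile (μ := c2 * s ^ 2 / 2) hκ (by positivity) hη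
  have hsmooth : ContDiff ℝ (⊤ : ℕ∞) fun r : ℝ => r ^ 2 := by fun_prop
  have hA' := HasExtension.contDiff_comp hA hsmooth fun r => sq_nonneg r
  have hq' := HasExtension.contDiff_comp hq hsmooth fun r => sq_nonneg r
  refine ⟨fun r => s / √2 * (r ^ k.natAbs * A (r ^ 2)),
    fun r => -(s * (1 - η + η * q (r ^ 2))) / 2 / √(3 / 2),
    profileTensor k.natAbs k.sign s η A q,
    contDiff_const.mul ((contDiff_id.pow _).mul hA'),
    ((contDiff_const.mul (contDiff_const.add (contDiff_const.mul hq'))).neg.div_const 2).div_const _,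
    fun r hr => ?_,
    fun r φ => ?_, contDiff_profileTensor _ _ _ _ hA hq, isS0_profileTensor _ _ _ _ _ _,
    fun x => ?_, fun ε hε => ?_⟩
  · obtain ⟨hA0, -, -, hq0, hq1⟩ := hbd (r ^ 2) (by positivity)
    have hl := lowerBiaxial_pos (κ := k.natAbs) (z := r ^ 2) hβ (by positivity)
    have hfac := (biaxial_factor_bounds hη (hl.le.trans hq0) hq1).1
    refine ⟨by positivity, ?_⟩
    simp only [neg_div, neg_lt_zero]
    positivity
  · rw [profileTensor_polar hk, E1, E0, smul_smul, smul_smul]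
    have h2 : √(3 / 2 : ℝ) ≠ 0 := by positivity
    congr 2
    · field_simp
    · rw [div_mul_cancel₀ _ h2]
  · rw [matLap_profileTensor hκ hσ hAode hqode, ← ha2, ← hb2]
  · refine ⟨1 + s ^ 2 * (k.natAbs * β) / ε, fun r φ hr => ?_⟩
    rw [frobSq_profileTensor_sub hk]
    have hM : 0 ≤ s ^ 2 * (k.natAbs * β) / ε := by positivity
    have hr1 : 1 ≤ r := by linarith
    have hz : 0 < r ^ 2 := by positivity
    obtain ⟨hA0, hlA, hA1, hlq, hq1⟩ := hbd (r ^ 2) hz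
    have hP : (r ^ 2) ^ k.natAbs * A (r ^ 2) ^ 2 = (r ^ k.natAbs * A (r ^ 2)) ^ 2 := by ring
    rw [hP] at hlA hA1
    refine (profile_error_le hκ hη hβ hz (by positivity) hA1 hlA hlq hq1).trans_lt ?_
    rw [← mul_div_assoc, div_lt_iff₀ hz]
    have : s ^ 2 * (k.natAbs * β) / ε < r ^ 2 := by nlinarith
    rwa [div_lt_iff₀ hε, mul_comm _ ε] at this

end Construction

end

/-- existence of a smooth `k`-radially symmetric solution
`Q = u(r)E₁(φ) + v(r)E₀` of the Euler–Lagrange equation on `ℝ²` with `u > 0`, `v < 0`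
and `Q(x) → s₊(n(x)⊗n(x) − (1/3)I₃)` as `|x| → ∞`. -/
theorem stmt17 (a2 b2 c2 : ℝ) (ha : 0 < a2) (hb : 0 < b2) (hc : 0 < c2)
    (k : ℤ) (hk : k ≠ 0) :
    ∃ (u v : ℝ → ℝ) (Q : ℝ × ℝ → Mat3),
      ContDiffOn ℝ 2 u (Set.Ici 0) ∧ ContDiffOn ℝ (⊤ : ℕ∞) u (Set.Ioi 0) ∧
      ContDiffOn ℝ (⊤ : ℕ∞) v (Set.Ici 0) ∧
      (∀ r : ℝ, 0 < r → 0 < u r ∧ v r < 0) ∧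
      (∀ r φ : ℝ, 0 ≤ r →
        Q (r * Real.cos φ, r * Real.sin φ) = u r • E1 k φ + v r • E0) ∧
      (∀ i j, ContDiff ℝ (⊤ : ℕ∞) (fun x => Q x i j)) ∧
      (∀ x, isS0 (Q x)) ∧
      (∀ x, matLap Q x = ELrhs a2 b2 c2 (Q x)) ∧
      (∀ ε : ℝ, 0 < ε → ∃ M : ℝ, ∀ r φ : ℝ, M ≤ r →
        frobSq (Q (r * Real.cos φ, r * Real.sin φ)
          - splus a2 b2 c2 • (vecMulVec (nvec k φ) (nvec k φ) - (1/3 : ℝ) • (1 : Mat3))) < ε) := by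
  obtain ⟨u, v, Q, hu, hv, hsign, hQ, hsmooth, hS, hEL, hlim⟩ :=
    exists_radial_solution a2 b2 c2 ha hb hc k hk
  exact ⟨u, v, Q, (contDiff_infty.1 hu 2).contDiffOn, hu.contDiffOn, hv.contDiffOn,
    hsign, fun r φ _ => hQ r φ, hsmooth, hS, hEL, hlim⟩
end
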